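/- Let m ≥ 0 be an integer and let μ be a positive measure on Π⁺×Π⁺. The following are equivalent: (1) there exists C > 0 such that ∫_{Π⁺×Π⁺} |(□^m F)(z₁, z₂, 0)|² dμ(z₁,z₂) ≤ C ‖F‖²_{H²(T_Σ)} for every F ∈ H²(T_Σ); (2) there exists C' > 0 such that ∫_{Π⁺×Π⁺} |G|² dμ ≤ C' ‖G‖²_{A²_{(2m−1/2,2m−1/2)}(Π⁺×Π⁺)} for every G ∈ A²_{(2m−1/2,2m−1/2)}(Π⁺×Π⁺). -/

import Mathlib

open MeasureTheory Set
open scoped ENNReal NNReal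

noncomputable section

/-- The spherical cone `Σ = {y ∈ ℝ³ : y₁y₂ − y₃² > 0, y₁ > 0}`. -/
def Sigma3 : Set (Fin 3 → ℝ) :=
  {y | 0 < y 0 * y 1 - (y 2) ^ 2 ∧ 0 < y 0}

/-- The tube domain `T_Σ = ℝ³ + iΣ ⊂ ℂ³`. -/
def TSigma : Set (Fin 3 → ℂ) :=
  {z | (fun i => (z i).im) ∈ Sigma3}

/-- Square of the Hardy space `H²(T_Σ)` norm. -/
def hardyNormSqSigma (F : (Fin 3 → ℂ) → ℂ) : ℝ≥0∞ :=
  ⨆ y ∈ Sigma3,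
    ∫⁻ x : Fin 3 → ℝ, (‖F (fun i => (x i : ℂ) + (y i : ℂ) * Complex.I)‖₊ : ℝ≥0∞) ^ 2

/-- Partial derivative in the `i`-th complex coordinate. -/
def pd (i : Fin 3) (F : (Fin 3 → ℂ) → ℂ) : (Fin 3 → ℂ) → ℂ :=
  fun z => fderiv ℂ F z (Pi.single i 1)

/-- The box operator `□ = −4 ∂²/∂z₁∂z₂ + ∂²/∂z₃²` associated to the spherical cone. -/
def BoxS (F : (Fin 3 → ℂ) → ℂ) : (Fin 3 → ℂ) → ℂ :=
  fun z => -4 * pd 0 (pd 1 F) z + pd 2 (pd 2 F) z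

/-- The upper half-plane `Π⁺`. -/
def UHP : Set ℂ := {z : ℂ | 0 < z.im}

/-- The weighted measure `dV_α(x+iy) = y^α dx dy` on the upper half-plane. -/
def Vm (α : ℝ) : Measure ℂ :=
  (volume.restrict UHP).withDensity fun z => ENNReal.ofReal (z.im ^ α)

/-- Square of the weighted Bergman space `A²_{(α₁,α₂)}(Π⁺×Π⁺)` norm:
`‖G‖² = ∫_{Π⁺×Π⁺} |G(x₁+iy₁,x₂+iy₂)|² y₁^{α₁} y₂^{α₂} dx₁dx₂dy₁dy₂`. -/
def bergNormSqProd (α₁ α₂ : ℝ) (G : ℂ × ℂ → ℂ) : ℝ≥0∞ :=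
  ∫⁻ z, (‖G z‖₊ : ℝ≥0∞) ^ 2 ∂((Vm α₁).prod (Vm α₂))

/-!
By the Paley–Wiener theorem `F ∈ H²(T_Σ)` is the Fourier–Laplace transform of some `f ∈ L²`
supported in the dual cone of `Σ`, with `‖f‖₂ = ‖F‖`; then `□` multiplies `f` by
`P(t) = 4π²(4t₀t₁ - t₂²)`, and restricting to `z₃ = 0` integrates the density over `t₂`. So
`(□ᵐF)(·, ·, 0)` has density `g(s) = ∫ P(s, r)ᵐ f(s, r) dr` on the quadrant. Since `|r| ≤ 2√q` and
`P ≲ q` on the dual cone, where `q = s₀s₁`, Cauchy–Schwarz gives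
`|g(s)|² ≲ q^{2m+1/2} ∫ |f(s, r)|² dr`. As `A²_{(α,α)}` is the weighted `L²` space with weight
`q^{-(α+1)}` on the density side, `α = 2m - 1/2` is exactly the exponent for which
`F ↦ □ᵐF(·, ·, 0)` is bounded into `A²_{(α,α)}`. Spreading `g` uniformly over the fibres `|r| ≤ √q`
and dividing by `Pᵐ` gives a bounded right inverse, and the two Carleson conditions correspond under
these maps.
-/

section LaplaceTransform

open Filter Topology
open scoped Real

variable {ι : Type*}

/-- The point `x + iy` of `ℂ^ι`. -/
def ofReIm (x y : ι → ℝ) : ι → ℂ := fun i => (x i : ℂ) + (y i : ℂ) * Complex.I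

/-- The tube domain `ℝ^ι + iΩ`. -/
def tube (Ω : Set (ι → ℝ)) : Set (ι → ℂ) := {z | (fun i => (z i).im) ∈ Ω}

@[fun_prop]
theorem continuous_ofReIm : Continuous fun p : (ι → ℝ) × (ι → ℝ) => ofReIm p.1 p.2 := by
  unfold ofReIm; fun_prop

theorem ofReIm_mem_tube {Ω : Set (ι → ℝ)} {x y : ι → ℝ} : ofReIm x y ∈ tube Ω ↔ y ∈ Ω := by
  simp [tube, ofReIm]

theorem ofReIm_re_im (z : ι → ℂ) : ofReIm (fun i => (z i).re) (fun i => (z i).im) = z :=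
  funext fun i => Complex.re_add_im (z i)

theorem isOpen_tube {Ω : Set (ι → ℝ)} (hΩ : IsOpen Ω) : IsOpen (tube Ω) :=
  hΩ.preimage (f := fun z : ι → ℂ => fun i => (z i).im) (by fun_prop)

variable [Fintype ι]

/-- The modulus `e^{-2π y·t}` of the kernel `e^{2πi z·t}` at `z = x + iy`. -/
def expWeight (y t : ι → ℝ) : ℝ := Real.exp (-(2 * π * (y ⬝ᵥ t)))

/-- The kernel `e^{2πi z·t}` of the Fourier–Laplace transform. -/
def expKernel (z : ι → ℂ) (t : ι → ℝ) : ℂ :=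
  Complex.exp (2 * π * Complex.I * (z ⬝ᵥ fun i => (t i : ℂ)))

/-- The Fourier–Laplace transform `∫ e^{2πi z·t} f(t) dt`. On real points it is the inverse Fourier
transform. -/
def fourierLaplace (f : (ι → ℝ) → ℂ) (z : ι → ℂ) : ℂ := ∫ t, expKernel z t * f t

/-- The densities whose Fourier–Laplace integral converges absolutely over all of `tube Ω`. -/
def TubeIntegrable (Ω : Set (ι → ℝ)) (f : (ι → ℝ) → ℂ) : Prop :=
  ∀ y ∈ Ω, Integrable fun t => (expWeight y t : ℂ) * f t

theorem expWeight_pos (y t : ι → ℝ) : 0 < expWeight y t := Real.exp_pos _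

theorem expWeight_ne_zero (y t : ι → ℝ) : (expWeight y t : ℂ) ≠ 0 :=
  Complex.ofReal_ne_zero.2 (expWeight_pos y t).ne'

@[simp]
theorem norm_expWeight (y t : ι → ℝ) : ‖(expWeight y t : ℂ)‖ = expWeight y t :=
  Complex.norm_of_nonneg (expWeight_pos y t).le

theorem expWeight_add (y y' t : ι → ℝ) : expWeight (y + y') t = expWeight y t * expWeight y' t := by
  simp only [expWeight, ← Real.exp_add, add_dotProduct]
  ring_nf

theorem continuous_expWeight (y : ι → ℝ) : Continuous (expWeight y) := by
  unfold expWeight dotProduct; fun_prop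

theorem continuous_expKernel (z : ι → ℂ) : Continuous (expKernel z) := by
  unfold expKernel dotProduct; fun_prop

theorem expKernel_ofReIm (x y t : ι → ℝ) :
    expKernel (ofReIm x y) t = expKernel (ofReIm x 0) t * expWeight y t := by
  rw [expKernel, expKernel, expWeight, Complex.ofReal_exp, ← Complex.exp_add]
  congr 1
  simp only [ofReIm, dotProduct, Pi.zero_apply, Complex.ofReal_zero, zero_mul, add_zero, add_mul,
    Finset.sum_add_distrib]
  push_cast
  simp_rw [mul_right_comm _ Complex.I, ← Finset.sum_mul]
  linear_combination (2 * π * ∑ i, (y i : ℂ) * t i) * Complex.I_mul_I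

theorem norm_expKernel (z : ι → ℂ) (t : ι → ℝ) :
    ‖expKernel z t‖ = expWeight (fun i => (z i).im) t := by
  rw [expKernel, Complex.norm_exp, expWeight]
  congr 1
  simp [dotProduct, Complex.mul_re, Complex.mul_im]

theorem fourierLaplace_ofReIm (f : (ι → ℝ) → ℂ) (x y : ι → ℝ) :
    fourierLaplace f (ofReIm x y)
      = fourierLaplace (fun t => (expWeight y t : ℂ) * f t) (ofReIm x 0) := by
  simp only [fourierLaplace, expKernel_ofReIm x y, mul_assoc]

theorem norm_expKernel_mul (f : (ι → ℝ) → ℂ) (z : ι → ℂ) (t : ι → ℝ) :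
    ‖expKernel z t * f t‖ = ‖(expWeight (fun i => (z i).im) t : ℂ) * f t‖ := by
  rw [norm_mul, norm_mul, norm_expKernel, norm_expWeight]

theorem exists_forall_add_smul_mem_of_isOpen {E : Type*} [SeminormedAddCommGroup E]
    [NormedSpace ℝ E] {Ω : Set E} (hΩ : IsOpen Ω) {y : E} (hy : y ∈ Ω) :
    ∃ δ : ℝ, 0 < δ ∧ ∀ v : E, ‖v‖ ≤ 1 → y + δ • v ∈ Ω := by
  obtain ⟨ε, hε, h⟩ := Metric.nhds_basis_closedBall.mem_iff.1 (hΩ.mem_nhds hy)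
  refine ⟨ε, hε, fun v hv => h ?_⟩
  rw [mem_closedBall_iff_norm, add_sub_cancel_left, norm_smul, Real.norm_of_nonneg hε.le]
  exact mul_le_of_le_one_right hε.le hv

/-- The decaying factor `e^{-2πδ ∑|tᵢ|}` gained by moving to the corners of a cube. -/
def expDecay (δ : ℝ) (t : ι → ℝ) : ℝ := Real.exp (-(2 * π * δ * ∑ i, |t i|))

theorem expDecay_pos (δ : ℝ) (t : ι → ℝ) : 0 < expDecay δ t := Real.exp_pos _

theorem continuous_expDecay (δ : ℝ) : Continuous (expDecay (ι := ι) δ) := by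
  unfold expDecay; fun_prop

theorem sum_abs_mul_expDecay_le {δ : ℝ} (hδ : 0 < δ) (t : ι → ℝ) :
    2 * π * (∑ i, |t i|) * expDecay δ t ≤ δ⁻¹ := by
  have h := Real.add_one_le_exp (2 * π * δ * ∑ i, |t i|)
  rw [expDecay, Real.exp_neg, ← div_eq_mul_inv, div_le_iff₀ (Real.exp_pos _), inv_mul_eq_div,
    le_div_iff₀ hδ]
  linarith

theorem integrable_exp_neg_mul_abs {c : ℝ} (hc : 0 < c) :
    Integrable fun s : ℝ => Real.exp (-(c * |s|)) := by
  rw [← integrableOn_univ, ← Iic_union_Ioi (a := (0 : ℝ))]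
  refine IntegrableOn.union ?_ ?_
  · refine (integrableOn_exp_mul_Iic hc 0).congr_fun (fun t ht => ?_) measurableSet_Iic
    rw [abs_of_nonpos ht, mul_neg, neg_neg]
  · refine (integrableOn_exp_mul_Ioi (neg_lt_zero.2 hc) 0).congr_fun (fun t ht => ?_)
      measurableSet_Ioi
    simp only [abs_of_pos (mem_Ioi.1 ht), neg_mul]

theorem integrable_expDecay {δ : ℝ} (hδ : 0 < δ) : Integrable (expDecay (ι := ι) δ) := by
  have : expDecay (ι := ι) δ = fun t => ∏ i, Real.exp (-(2 * π * δ * |t i|)) := by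
    ext t
    rw [expDecay, ← Real.exp_sum, Finset.mul_sum, Finset.sum_neg_distrib]
  rw [this]
  exact Integrable.fintype_prod (f := fun _ s => Real.exp (-(2 * π * δ * |s|)))
    fun _ => integrable_exp_neg_mul_abs (by positivity)

theorem memLp_two_expDecay {δ : ℝ} (hδ : 0 < δ) :
    MemLp (fun t : ι → ℝ => (expDecay δ t : ℂ)) 2 := by
  have hm : AEStronglyMeasurable (fun t : ι → ℝ => (expDecay δ t : ℂ)) volume :=
    (Complex.continuous_ofReal.comp (continuous_expDecay δ)).aestronglyMeasurable
  rw [memLp_two_iff_integrable_sq_norm hm]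
  refine (integrable_expDecay (mul_pos two_pos hδ)).congr (.of_forall fun t => ?_)
  simp only [Complex.norm_real, Real.norm_of_nonneg (expDecay_pos δ t).le]
  rw [expDecay, expDecay, sq, ← Real.exp_add]
  ring_nf

theorem abs_dotProduct_le (v t : ι → ℝ) : |v ⬝ᵥ t| ≤ ‖v‖ * ∑ i, |t i| := by
  rw [dotProduct, Finset.mul_sum]
  refine (Finset.abs_sum_le_sum_abs _ _).trans (Finset.sum_le_sum fun i _ => ?_)
  rw [abs_mul]
  gcongr
  exact norm_le_pi_norm v i

/-- The sign vector `σ = -sgn t` turns `σ·t` into `-∑|tᵢ|`, so near `y` the weight is dominated by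
the weights at the corners of a cube centred at `y`. -/
theorem exists_finset_expWeight_le {Ω : Set (ι → ℝ)} (hΩ : IsOpen Ω) {y : ι → ℝ} (hy : y ∈ Ω) :
    ∃ δ > 0, ∃ s : Finset (ι → ℝ), ↑s ⊆ Ω ∧ ∀ y' t : ι → ℝ, ‖y' - y‖ ≤ δ →
      expWeight y' t ≤ expDecay δ t * ∑ v ∈ s, expWeight v t := by
  classical
  obtain ⟨δ, hδ, hmem⟩ := exists_forall_add_smul_mem_of_isOpen hΩ hy
  let corner (σ : ι → Bool) : ι → ℝ := fun i => if σ i then -1 else 1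
  have hcorner : ∀ σ, ‖corner σ‖ ≤ 1 := fun σ =>
    (pi_norm_le_iff_of_nonneg zero_le_one).2 fun i => by cases h : σ i <;> simp [corner, h]
  refine ⟨δ / 2, half_pos hδ, Finset.univ.image fun σ => y + δ • corner σ, ?_,
    fun y' t hy' => ?_⟩
  · simpa [range_subset_iff] using fun σ => hmem _ (hcorner σ)
  let σ : ι → Bool := fun i => decide (0 ≤ t i)
  have hσ : corner σ ⬝ᵥ t = -∑ i, |t i| := by
    rw [dotProduct, ← Finset.sum_neg_distrib]
    refine Finset.sum_congr rfl fun i _ => ?_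
    rcases le_or_gt 0 (t i) with hi | hi
    · simp [corner, σ, hi, abs_of_nonneg hi]
    · simp [corner, σ, not_le.2 hi, abs_of_neg hi]
  calc expWeight y' t ≤ expDecay (δ / 2) t * expWeight (y + δ • corner σ) t := by
        rw [expWeight, expDecay, expWeight, ← Real.exp_add, Real.exp_le_exp, add_dotProduct,
          smul_dotProduct, hσ, smul_eq_mul]
        have h := (neg_abs_le _).trans' (neg_le_neg ((abs_dotProduct_le (y' - y) t).trans
          (mul_le_mul_of_nonneg_right hy' (Finset.sum_nonneg fun i _ => abs_nonneg (t i)))))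
        rw [sub_dotProduct] at h
        nlinarith [Real.pi_pos]
    _ ≤ _ := mul_le_mul_of_nonneg_left
        (Finset.single_le_sum (f := fun v => expWeight v t) (fun v _ => (expWeight_pos v t).le)
          (Finset.mem_image.2 ⟨σ, Finset.mem_univ σ, rfl⟩)) (expDecay_pos _ t).le

theorem TubeIntegrable.aestronglyMeasurable {Ω : Set (ι → ℝ)} {f : (ι → ℝ) → ℂ}
    (hf : TubeIntegrable Ω f) {y : ι → ℝ} (hy : y ∈ Ω) : AEStronglyMeasurable f volume := by
  have hw : Continuous fun t => ((expWeight y t : ℂ))⁻¹ :=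
    (Complex.continuous_ofReal.comp (continuous_expWeight y)).inv₀ (expWeight_ne_zero y)
  refine (hw.aestronglyMeasurable.mul (hf y hy).aestronglyMeasurable).congr (.of_forall fun t => ?_)
  exact inv_mul_cancel_left₀ (expWeight_ne_zero y t) (f t)

theorem TubeIntegrable.integrable_expKernel_mul {Ω : Set (ι → ℝ)} {f : (ι → ℝ) → ℂ}
    (hf : TubeIntegrable Ω f) {z : ι → ℂ} (hz : z ∈ tube Ω) :
    Integrable fun t => expKernel z t * f t :=
  (hf _ hz).congr' ((continuous_expKernel z).aestronglyMeasurable.mul (hf.aestronglyMeasurable hz))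
    (.of_forall fun t => (norm_expKernel_mul f z t).symm)

theorem TubeIntegrable.add {Ω : Set (ι → ℝ)} {f g : (ι → ℝ) → ℂ} (hf : TubeIntegrable Ω f)
    (hg : TubeIntegrable Ω g) : TubeIntegrable Ω fun t => f t + g t := fun y hy => by
  simpa only [mul_add] using! (hf y hy).add (hg y hy)

theorem TubeIntegrable.const_mul {Ω : Set (ι → ℝ)} {f : (ι → ℝ) → ℂ} (hf : TubeIntegrable Ω f)
    (c : ℂ) : TubeIntegrable Ω fun t => c * f t := fun y hy => by
  simpa only [mul_left_comm] using (hf y hy).const_mul c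

theorem fourierLaplace_const_mul (f : (ι → ℝ) → ℂ) (c : ℂ) (z : ι → ℂ) :
    fourierLaplace (fun t => c * f t) z = c * fourierLaplace f z := by
  simp only [fourierLaplace, mul_left_comm _ c, integral_const_mul]

theorem fourierLaplace_add {Ω : Set (ι → ℝ)} {f g : (ι → ℝ) → ℂ} (hf : TubeIntegrable Ω f)
    (hg : TubeIntegrable Ω g) {z : ι → ℂ} (hz : z ∈ tube Ω) :
    fourierLaplace (fun t => f t + g t) z = fourierLaplace f z + fourierLaplace g z := by
  simp only [fourierLaplace, mul_add]
  exact integral_add (hf.integrable_expKernel_mul hz) (hg.integrable_expKernel_mul hz)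

theorem TubeIntegrable.exists_integrable_bound {Ω : Set (ι → ℝ)} {f : (ι → ℝ) → ℂ}
    (hf : TubeIntegrable Ω f) (hΩ : IsOpen Ω) {y : ι → ℝ} (hy : y ∈ Ω) :
    ∃ δ > 0, ∃ b : (ι → ℝ) → ℝ, Integrable b ∧ ∀ y' t : ι → ℝ, ‖y' - y‖ ≤ δ →
      2 * π * (∑ i, |t i|) * ‖(expWeight y' t : ℂ) * f t‖ ≤ b t := by
  obtain ⟨δ, hδ, s, hs, hbound⟩ := exists_finset_expWeight_le hΩ hy
  refine ⟨δ, hδ, fun t => δ⁻¹ * ∑ v ∈ s, ‖(expWeight v t : ℂ) * f t‖,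
    (integrable_finsetSum _ fun v hv => (hf v (hs hv)).norm).const_mul _, fun y' t hy' => ?_⟩
  simp only [norm_mul, norm_expWeight, ← Finset.sum_mul]
  calc 2 * π * (∑ i, |t i|) * (expWeight y' t * ‖f t‖)
      ≤ 2 * π * (∑ i, |t i|) * ((expDecay δ t * ∑ v ∈ s, expWeight v t) * ‖f t‖) := by
        gcongr
        exact hbound y' t hy'
    _ = (2 * π * (∑ i, |t i|) * expDecay δ t) * ((∑ v ∈ s, expWeight v t) * ‖f t‖) := by ring
    _ ≤ δ⁻¹ * ((∑ v ∈ s, expWeight v t) * ‖f t‖) :=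
        mul_le_mul_of_nonneg_right (sum_abs_mul_expDecay_le hδ t)
          (mul_nonneg (Finset.sum_nonneg fun v _ => (expWeight_pos v t).le) (norm_nonneg _))

theorem TubeIntegrable.coord_mul {Ω : Set (ι → ℝ)} {f : (ι → ℝ) → ℂ} (hf : TubeIntegrable Ω f)
    (hΩ : IsOpen Ω) (i : ι) : TubeIntegrable Ω fun t => (2 * π * Complex.I * t i) * f t := by
  intro y hy
  obtain ⟨δ, hδ, b, hb, hle⟩ := hf.exists_integrable_bound hΩ hy
  have hcoord : Continuous fun t : ι → ℝ => 2 * π * Complex.I * (t i : ℂ) := by fun_prop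
  have hweight : Continuous fun t => (expWeight y t : ℂ) :=
    Complex.continuous_ofReal.comp (continuous_expWeight y)
  refine hb.mono' (hweight.aestronglyMeasurable.mul
    (hcoord.aestronglyMeasurable.mul (hf.aestronglyMeasurable hy))) (.of_forall fun t => ?_)
  refine le_trans ?_ (hle y t (by simpa using hδ.le))
  rw [mul_left_comm, norm_mul]
  refine mul_le_mul_of_nonneg_right ?_ (norm_nonneg _)
  have hi : |t i| ≤ ∑ j, |t j| :=
    Finset.single_le_sum (f := fun j => |t j|) (fun j _ => abs_nonneg _) (Finset.mem_univ i)
  simp only [norm_mul, Complex.norm_ofNat, Complex.norm_real, Complex.norm_I, Real.norm_eq_abs,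
    abs_of_pos Real.pi_pos, mul_one]
  gcongr

/-- The linear form `w ↦ 2πi w·t`. -/
def phaseForm (t : ι → ℝ) : (ι → ℂ) →L[ℂ] ℂ :=
  ∑ i, (2 * π * Complex.I * t i) • ContinuousLinearMap.proj i

theorem phaseForm_apply (t : ι → ℝ) (w : ι → ℂ) :
    phaseForm t w = 2 * π * Complex.I * (w ⬝ᵥ fun i => (t i : ℂ)) := by
  simp only [phaseForm, _root_.sum_apply, _root_.smul_apply, ContinuousLinearMap.proj_apply,
    smul_eq_mul, dotProduct, Finset.mul_sum]
  exact Finset.sum_congr rfl fun i _ => by ring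

theorem continuous_phaseForm : Continuous (phaseForm (ι := ι)) := by
  unfold phaseForm; fun_prop

theorem norm_phaseForm_le (t : ι → ℝ) : ‖phaseForm t‖ ≤ 2 * π * ∑ i, |t i| := by
  refine ContinuousLinearMap.opNorm_le_bound _ (by positivity) fun w => ?_
  rw [phaseForm_apply, norm_mul, dotProduct, mul_assoc (2 * π) (∑ i, |t i|), Finset.sum_mul]
  simp only [norm_mul, Complex.norm_ofNat, Complex.norm_real, Complex.norm_I, Real.norm_eq_abs,
    abs_of_pos Real.pi_pos, mul_one]
  gcongr
  refine (norm_sum_le _ _).trans (Finset.sum_le_sum fun i _ => ?_)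
  rw [norm_mul, Complex.norm_real, Real.norm_eq_abs, mul_comm]
  gcongr
  exact norm_le_pi_norm w i

theorem hasFDerivAt_expKernel_mul (t : ι → ℝ) (c : ℂ) (w : ι → ℂ) :
    HasFDerivAt (fun w => expKernel w t * c) ((expKernel w t * c) • phaseForm t) w := by
  have h : HasFDerivAt (fun w : ι → ℂ => 2 * π * Complex.I * (w ⬝ᵥ fun i => (t i : ℂ)))
      (phaseForm t) w := by
    simpa only [← phaseForm_apply] using (phaseForm t).hasFDerivAt
  refine (h.cexp.mul_const c).congr_fderiv ?_
  rw [smul_smul, mul_comm]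
  rfl

theorem TubeIntegrable.hasFDerivAt {Ω : Set (ι → ℝ)} {f : (ι → ℝ) → ℂ} (hf : TubeIntegrable Ω f)
    (hΩ : IsOpen Ω) {z : ι → ℂ} (hz : z ∈ tube Ω) :
    Integrable (fun t => (expKernel z t * f t) • phaseForm t) ∧
    HasFDerivAt (fourierLaplace f) (∫ t, (expKernel z t * f t) • phaseForm t) z := by
  obtain ⟨δ, hδ, b, hb, hle⟩ := hf.exists_integrable_bound hΩ hz
  have hm (w : ι → ℂ) : AEStronglyMeasurable (fun t => expKernel w t * f t) volume :=
    (continuous_expKernel w).aestronglyMeasurable.mul (hf.aestronglyMeasurable hz)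
  have hm' : AEStronglyMeasurable (fun t => (expKernel z t * f t) • phaseForm t) volume :=
    (hm z).smul continuous_phaseForm.aestronglyMeasurable
  have hbound (t : ι → ℝ) (w : ι → ℂ) (hw : w ∈ Metric.ball z δ) :
      ‖(expKernel w t * f t) • phaseForm t‖ ≤ b t := by
    have him : ‖(fun i => (w i).im) - fun i => (z i).im‖ ≤ δ :=
      (pi_norm_le_iff_of_nonneg hδ.le).2 fun i =>
        ((Complex.abs_im_le_norm (w i - z i)).trans (norm_le_pi_norm (w - z) i)).trans
          (mem_ball_iff_norm.1 hw).le
    rw [norm_smul, norm_expKernel_mul, mul_comm]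
    exact (mul_le_mul_of_nonneg_right (norm_phaseForm_le t) (norm_nonneg _)).trans (hle _ t him)
  refine ⟨hb.mono' hm' (.of_forall fun t => hbound t z (Metric.mem_ball_self hδ)), ?_⟩
  exact hasFDerivAt_integral_of_dominated_of_fderiv_le (bound := b) (s := Metric.ball z δ)
    (Metric.ball_mem_nhds z hδ) (.of_forall hm) (hf.integrable_expKernel_mul hz) hm'
    (.of_forall hbound) hb (.of_forall fun t w _ => hasFDerivAt_expKernel_mul t (f t) w)

theorem TubeIntegrable.differentiableOn {Ω : Set (ι → ℝ)} {f : (ι → ℝ) → ℂ}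
    (hf : TubeIntegrable Ω f) (hΩ : IsOpen Ω) : DifferentiableOn ℂ (fourierLaplace f) (tube Ω) :=
  fun _ hz => (hf.hasFDerivAt hΩ hz).2.differentiableAt.differentiableWithinAt

theorem TubeIntegrable.fderiv_single [DecidableEq ι] {Ω : Set (ι → ℝ)} {f : (ι → ℝ) → ℂ}
    (hf : TubeIntegrable Ω f) (hΩ : IsOpen Ω) {z : ι → ℂ} (hz : z ∈ tube Ω) (i : ι) :
    fderiv ℂ (fourierLaplace f) z (Pi.single i 1)
      = fourierLaplace (fun t => (2 * π * Complex.I * t i) * f t) z := by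
  obtain ⟨hint, hderiv⟩ := hf.hasFDerivAt hΩ hz
  rw [hderiv.fderiv, ContinuousLinearMap.integral_apply hint]
  refine integral_congr_ae (.of_forall fun t => ?_)
  simp only [_root_.smul_apply, phaseForm_apply, smul_eq_mul, single_one_dotProduct]
  ring

end LaplaceTransform

section FourierLp

open FourierTransform
open scoped SchwartzMap

variable {E : Type*} [NormedAddCommGroup E] [MeasurableSpace E] [BorelSpace E]
  [InnerProductSpace ℝ E] [FiniteDimensional ℝ E]

theorem ae_eq_of_forall_toTemperedDistribution_eq {u : Lp (α := E) ℂ 2 volume} {k : E → ℂ}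
    (hk : LocallyIntegrable k) (h : ∀ φ : 𝓢(E, ℂ), (u : 𝓢'(E, ℂ)) φ = ∫ x, φ x • k x) :
    u =ᵐ[volume] k := by
  refine ae_eq_of_integral_contDiff_smul_eq ((Lp.memLp u).locallyIntegrable one_le_two) hk
    fun g hg hc => ?_
  have hc' : HasCompactSupport fun x => (g x : ℂ) :=
    hc.comp_left (g := fun r : ℝ => (r : ℂ)) Complex.ofReal_zero
  have hu := h (hc'.toSchwartzMap (Complex.ofRealCLM.contDiff.comp hg))
  rw [Lp.toTemperedDistribution_apply] at hu
  exact hu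

theorem integral_fourier_smul_eq {φ h : E → ℂ} (hφ : Integrable φ) (hh : Integrable h) :
    ∫ x, 𝓕 φ x • h x = ∫ x, φ x • 𝓕 h x := by
  have := VectorFourier.integral_fourierIntegral_smul_eq_flip (L := innerₗ E) (μ := volume)
    (ν := volume) Real.continuous_fourierChar continuous_inner hφ hh
  rwa [flip_innerₗ] at this

theorem integral_fourierInv_smul_eq {φ h : E → ℂ} (hφ : Integrable φ) (hh : Integrable h) :
    ∫ x, 𝓕⁻ φ x • h x = ∫ x, φ x • 𝓕⁻ h x := by
  simp only [Real.fourierInv_eq_fourier_neg]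
  rw [← integral_neg_eq_self]
  simp only [neg_neg]
  rw [integral_fourier_smul_eq hφ hh.comp_neg]
  simp only [← Real.fourierInv_eq_fourier_comp_neg, Real.fourierInv_eq_fourier_neg]

theorem continuous_fourier {h : E → ℂ} (h1 : Integrable h) : Continuous (𝓕 h) :=
  VectorFourier.fourierIntegral_continuous Real.continuous_fourierChar continuous_inner h1

theorem toTemperedDistribution_toLp_apply {h : E → ℂ} (h2 : MemLp h 2) (φ : 𝓢(E, ℂ)) :
    (h2.toLp h : 𝓢'(E, ℂ)) φ = ∫ x, φ x • h x := by
  rw [Lp.toTemperedDistribution_apply]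
  exact integral_congr_ae (h2.coeFn_toLp.mono fun x hx => congrArg (φ x • ·) hx)

theorem coeFn_fourier_toLp {h : E → ℂ} (h1 : Integrable h) (h2 : MemLp h 2) :
    (𝓕 (h2.toLp h) : Lp (α := E) ℂ 2 volume) =ᵐ[volume] 𝓕 h := by
  refine ae_eq_of_forall_toTemperedDistribution_eq (continuous_fourier h1).locallyIntegrable
    fun φ => ?_
  rw [← Lp.fourier_toTemperedDistribution_eq, TemperedDistribution.fourier_apply,
    toTemperedDistribution_toLp_apply]
  exact integral_fourier_smul_eq φ.integrable h1

theorem coeFn_fourierInv_toLp {h : E → ℂ} (h1 : Integrable h) (h2 : MemLp h 2) :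
    (𝓕⁻ (h2.toLp h) : Lp (α := E) ℂ 2 volume) =ᵐ[volume] 𝓕⁻ h := by
  have hcont : Continuous (𝓕⁻ h) := by
    rw [Real.fourierInv_eq_fourier_comp_neg]
    exact continuous_fourier h1.comp_neg
  refine ae_eq_of_forall_toTemperedDistribution_eq hcont.locallyIntegrable fun φ => ?_
  rw [← Lp.fourierInv_toTemperedDistribution_eq, TemperedDistribution.fourierInv_apply,
    toTemperedDistribution_toLp_apply]
  rw [SchwartzMap.fourierInv_coe]
  exact integral_fourierInv_smul_eq φ.integrable h1

theorem ae_eq_fourierInv_fourier_Lp {u : Lp (α := E) ℂ 2 volume}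
    (hu : Integrable (𝓕 u : Lp (α := E) ℂ 2 volume)) :
    u =ᵐ[volume] 𝓕⁻ ((𝓕 u : Lp (α := E) ℂ 2 volume) : E → ℂ) := by
  have h := coeFn_fourierInv_toLp hu (Lp.memLp _)
  rwa [Lp.toLp_coeFn, fourierInv_fourier_eq] at h

end FourierLp

section FourierL2

open FourierTransform

variable {ι : Type*} [Fintype ι]

theorem fourier_comp_ofLp (h : (ι → ℝ) → ℂ) (t : ι → ℝ) :
    𝓕 (fun v : EuclideanSpace ℝ ι => h v.ofLp) (WithLp.toLp 2 t)
      = fourierLaplace h (ofReIm (-t) 0) := by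
  rw [Real.fourier_eq', fourierLaplace, ← (PiLp.volume_preserving_toLp ι).integral_comp
    (MeasurableEquiv.toLp 2 (ι → ℝ)).measurableEmbedding]
  congr 1
  ext x
  rw [smul_eq_mul, expKernel]
  congr 2
  simp only [PiLp.inner_apply, ofReIm, dotProduct, Pi.neg_apply, Pi.zero_apply]
  push_cast
  simp [Finset.mul_sum, mul_comm, mul_left_comm]

theorem fourierInv_comp_ofLp (h : (ι → ℝ) → ℂ) (x : ι → ℝ) :
    𝓕⁻ (fun v : EuclideanSpace ℝ ι => h v.ofLp) (WithLp.toLp 2 x)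
      = fourierLaplace h (ofReIm x 0) := by
  rw [Real.fourierInv_eq_fourier_neg, ← WithLp.toLp_neg, fourier_comp_ofLp, neg_neg]

/-- The class of `g` in `L²` of the Euclidean space with the same underlying coordinates. -/
def toEuclideanLp {g : (ι → ℝ) → ℂ} (hg : MemLp g 2) :
    Lp (α := EuclideanSpace ℝ ι) ℂ 2 volume :=
  (hg.comp_measurePreserving (PiLp.volume_preserving_ofLp ι)).toLp _

theorem enorm_toEuclideanLp {g : (ι → ℝ) → ℂ} (hg : MemLp g 2) :
    ‖toEuclideanLp hg‖ₑ = eLpNorm g 2 := by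
  rw [toEuclideanLp, Lp.enorm_toLp,
    eLpNorm_comp_measurePreserving hg.1 (PiLp.volume_preserving_ofLp ι)]

theorem toEuclideanLp_sub {g h : (ι → ℝ) → ℂ} (hg : MemLp g 2) (hh : MemLp h 2) :
    toEuclideanLp (hg.sub hh) = toEuclideanLp hg - toEuclideanLp hh :=
  rfl

/-- The `L²` Fourier transform on `ℝ^ι`, transported from Mathlib's Fourier transform on
`L²` of `EuclideanSpace ℝ ι`. -/
def fourierL2 {g : (ι → ℝ) → ℂ} (hg : MemLp g 2) (t : ι → ℝ) : ℂ :=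
  (𝓕 (toEuclideanLp hg)) (WithLp.toLp 2 t)

theorem memLp_fourierL2 {g : (ι → ℝ) → ℂ} (hg : MemLp g 2) : MemLp (fourierL2 hg) 2 :=
  (Lp.memLp _).comp_measurePreserving (PiLp.volume_preserving_toLp ι)

theorem eLpNorm_fourierL2 {g : (ι → ℝ) → ℂ} (hg : MemLp g 2) :
    eLpNorm (fourierL2 hg) 2 = eLpNorm g 2 := by
  have h := eLpNorm_comp_measurePreserving (p := 2)
    (Lp.aestronglyMeasurable (𝓕 (toEuclideanLp hg))) (PiLp.volume_preserving_toLp ι)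
  rw [← Lp.enorm_def, ← ofReal_norm, Lp.norm_fourier_eq, ofReal_norm, enorm_toEuclideanLp] at h
  exact h

theorem fourierL2_ae_eq {h : (ι → ℝ) → ℂ} (h1 : Integrable h) (h2 : MemLp h 2) :
    fourierL2 h2 =ᵐ[volume] fun t => fourierLaplace h (ofReIm (-t) 0) := by
  have h := coeFn_fourier_toLp
    ((PiLp.volume_preserving_ofLp ι).integrable_comp_of_integrable h1)
    (h2.comp_measurePreserving (PiLp.volume_preserving_ofLp ι))
  filter_upwards [(PiLp.volume_preserving_toLp ι).quasiMeasurePreserving.ae h] with t ht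
  exact ht.trans (fourier_comp_ofLp _ t)

theorem fourierL2_sub {g h : (ι → ℝ) → ℂ} (hg : MemLp g 2) (hh : MemLp h 2) :
    fourierL2 (hg.sub hh) =ᵐ[volume] fourierL2 hg - fourierL2 hh := by
  have hsub : 𝓕 (toEuclideanLp (hg.sub hh)) = 𝓕 (toEuclideanLp hg) - 𝓕 (toEuclideanLp hh) := by
    rw [toEuclideanLp_sub]
    exact map_sub (Lp.fourierTransformₗᵢ (EuclideanSpace ℝ ι) ℂ) _ _
  filter_upwards [(PiLp.volume_preserving_toLp ι).quasiMeasurePreserving.ae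
    (Lp.coeFn_sub (𝓕 (toEuclideanLp hg)) (𝓕 (toEuclideanLp hh)))] with t ht
  rw [← hsub] at ht
  exact ht

theorem eLpNorm_fourierLaplace_sub_fourierL2 {g h : (ι → ℝ) → ℂ} (hg : MemLp g 2)
    (h1 : Integrable h) (h2 : MemLp h 2) :
    eLpNorm ((fun t => fourierLaplace h (ofReIm (-t) 0)) - fourierL2 hg) 2
      = eLpNorm (h - g) 2 := by
  rw [← eLpNorm_fourierL2 (h2.sub hg)]
  exact eLpNorm_congr_ae (((fourierL2_ae_eq h1 h2).symm.sub (ae_eq_refl _)).trans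
    (fourierL2_sub h2 hg).symm)

theorem ae_eq_fourierLaplace_fourierL2 {g : (ι → ℝ) → ℂ} (hg : MemLp g 2)
    (hi : Integrable (fourierL2 hg)) :
    g =ᵐ[volume] fun x => fourierLaplace (fourierL2 hg) (ofReIm x 0) := by
  have hg' := hg.comp_measurePreserving (PiLp.volume_preserving_ofLp ι)
  have h := ae_eq_fourierInv_fourier_Lp (u := hg'.toLp _)
    ((PiLp.volume_preserving_ofLp ι).integrable_comp_of_integrable hi)
  filter_upwards [(PiLp.volume_preserving_toLp ι).quasiMeasurePreserving.ae h,
    (PiLp.volume_preserving_toLp ι).quasiMeasurePreserving.ae hg'.coeFn_toLp] with x hx hx'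
  rw [← fourierInv_comp_ofLp]
  exact hx'.symm.trans hx

theorem eLpNorm_fourierLaplace_ofReIm_le {ι : Type*} [Fintype ι] {f : (ι → ℝ) → ℂ} {y : ι → ℝ}
    (hf : Integrable fun t => (expWeight y t : ℂ) * f t) :
    eLpNorm (fun x => fourierLaplace f (ofReIm x y)) 2
      ≤ eLpNorm (fun t => (expWeight y t : ℂ) * f t) 2 := by
  rcases eq_or_ne (eLpNorm (fun t => (expWeight y t : ℂ) * f t) 2) ⊤ with htop | htop
  · exact htop ▸ le_top
  · have hf2 : MemLp (fun t => (expWeight y t : ℂ) * f t) 2 := ⟨hf.1, htop.lt_top⟩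
    have hae := (Measure.measurePreserving_neg (volume : Measure (ι → ℝ))).quasiMeasurePreserving.ae
      (fourierL2_ae_eq hf hf2)
    simp only [neg_neg, ← fourierLaplace_ofReIm] at hae
    rw [← eLpNorm_congr_ae hae, ← eLpNorm_fourierL2 hf2]
    exact (eLpNorm_comp_measurePreserving (memLp_fourierL2 hf2).1
      (Measure.measurePreserving_neg _)).le

end FourierL2

section ContourShift

variable {ι : Type*}

theorem continuous_comp_ofReIm {Ω : Set (ι → ℝ)} {F : (ι → ℂ) → ℂ}
    (hF : ContinuousOn F (tube Ω)) {y : ι → ℝ} (hy : y ∈ Ω) :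
    Continuous fun x => F (ofReIm x y) :=
  hF.comp_continuous (by fun_prop) fun _ => ofReIm_mem_tube.2 hy

theorem mem_segment_lineMap {y v : ι → ℝ} {s : ℝ} (hs : s ∈ Icc (0 : ℝ) 1) :
    y + s • v ∈ segment ℝ y (y + v) := by
  rw [segment_eq_image']
  exact ⟨s, hs, by simp⟩

theorem integral_boundary_square_eq_zero [Finite ι] {H : (ι → ℂ) → ℂ} {y v : ι → ℝ}
    (hH : DifferentiableOn ℂ H (tube (segment ℝ y (y + v)))) (x : ι → ℝ) :
    (∫ a in (0 : ℝ)..1, H (ofReIm (x + a • v) (y + (0 : ℝ) • v)))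
      - (∫ a in (0 : ℝ)..1, H (ofReIm (x + a • v) (y + (1 : ℝ) • v)))
      + Complex.I * (∫ a in (0 : ℝ)..1, H (ofReIm (x + (1 : ℝ) • v) (y + a • v)))
      - Complex.I * (∫ a in (0 : ℝ)..1, H (ofReIm (x + (0 : ℝ) • v) (y + a • v))) = 0 := by
  have := Fintype.ofFinite ι
  have hline (a s : ℝ) : ofReIm (x + a • v) (y + s • v)
      = fun i => ofReIm x y i + ((a : ℂ) + s * Complex.I) * (v i : ℂ) := by
    ext i
    simp only [ofReIm, Pi.add_apply, Pi.smul_apply, smul_eq_mul]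
    push_cast
    ring
  have hdiff : DifferentiableOn ℂ (fun w : ℂ => H fun i => ofReIm x y i + w * (v i : ℂ))
      (uIcc (0 : ℂ).re (1 + Complex.I).re ×ℂ uIcc (0 : ℂ).im (1 + Complex.I).im) := by
    refine hH.comp (by fun_prop) fun w hw => ?_
    have him : (fun i => (ofReIm x y i + w * (v i : ℂ)).im) = y + w.im • v := by
      ext i
      simp [ofReIm]
    rw [tube, mem_ofPred_eq, him]
    exact mem_segment_lineMap (by simpa using hw.2)
  simp only [hline]
  simpa using Complex.integral_boundary_rect_eq_zero_of_differentiableOn _ _ _ hdiff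

variable [Fintype ι]

theorem integrable_prod_shift {H : (ι → ℂ) → ℂ} {y v : ι → ℝ}
    (hH : ContinuousOn H (tube (segment ℝ y (y + v)))) {C : ℝ≥0∞} (hC : C ≠ ⊤)
    (hb : ∀ w ∈ segment ℝ y (y + v), ∫⁻ x, ‖H (ofReIm x w)‖ₑ ≤ C)
    {α β : ℝ → ℝ} (hα : Continuous α) (hβ : Continuous β) (hβI : MapsTo β (Icc 0 1) (Icc 0 1)) :
    Integrable (fun p : (ι → ℝ) × ℝ => H (ofReIm (p.1 + α p.2 • v) (y + β p.2 • v)))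
      (volume.prod (volume.restrict (Ioc 0 1))) := by
  have hmem : ∀ a ∈ Ioc (0 : ℝ) 1, y + β a • v ∈ segment ℝ y (y + v) := fun a ha =>
    mem_segment_lineMap (hβI (Ioc_subset_Icc_self ha))
  have hmeas : AEStronglyMeasurable
      (fun p : (ι → ℝ) × ℝ => H (ofReIm (p.1 + α p.2 • v) (y + β p.2 • v)))
      (volume.prod (volume.restrict (Ioc 0 1))) := by
    rw [← Measure.restrict_univ (μ := (volume : Measure (ι → ℝ))), Measure.prod_restrict]
    refine ContinuousOn.aestronglyMeasurable (hH.comp (by fun_prop) fun p hp => ?_)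
      (MeasurableSet.univ.prod measurableSet_Ioc)
    exact ofReIm_mem_tube.2 (hmem _ hp.2)
  refine ⟨hmeas, ?_⟩
  rw [HasFiniteIntegral, lintegral_prod_symm _ hmeas.enorm]
  calc _ ≤ ∫⁻ _ in Ioc (0 : ℝ) 1, C := by
        refine setLIntegral_mono' measurableSet_Ioc fun a ha => ?_
        exact (lintegral_add_right_eq_self (fun x => ‖H (ofReIm x (y + β a • v))‖ₑ)
          (α a • v)).trans_le (hb _ (hmem a ha))
    _ < ⊤ := by simp [hC.lt_top]

theorem integral_intervalIntegral_shift {H : (ι → ℂ) → ℂ} {y v : ι → ℝ}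
    (hH : ContinuousOn H (tube (segment ℝ y (y + v)))) {C : ℝ≥0∞} (hC : C ≠ ⊤)
    (hb : ∀ w ∈ segment ℝ y (y + v), ∫⁻ x, ‖H (ofReIm x w)‖ₑ ≤ C)
    {α β : ℝ → ℝ} (hα : Continuous α) (hβ : Continuous β) (hβI : MapsTo β (Icc 0 1) (Icc 0 1)) :
    Integrable (fun x => ∫ a in (0 : ℝ)..1, H (ofReIm (x + α a • v) (y + β a • v))) ∧
      ∫ x, (∫ a in (0 : ℝ)..1, H (ofReIm (x + α a • v) (y + β a • v)))
        = ∫ a in (0 : ℝ)..1, ∫ x, H (ofReIm x (y + β a • v)) := by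
  have hi := integrable_prod_shift hH hC hb hα hβ hβI
  simp only [intervalIntegral.integral_of_le (zero_le_one' ℝ)]
  refine ⟨hi.integral_prod_left, ?_⟩
  rw [integral_integral_swap hi]
  exact integral_congr_ae (.of_forall fun a =>
    integral_add_right_eq_self (fun x => H (ofReIm x (y + β a • v))) (α a • v))

theorem integral_sub_add_const_mul_sub_const_mul {X : Type*} [MeasurableSpace X] {μ : Measure X}
    {f g h k : X → ℂ} (hf : Integrable f μ) (hg : Integrable g μ) (hh : Integrable h μ)
    (hk : Integrable k μ) (c : ℂ) :
    ∫ x, (f x - g x + c * h x - c * k x) ∂μ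
      = ∫ x, f x ∂μ - ∫ x, g x ∂μ + c * ∫ x, h x ∂μ - c * ∫ x, k x ∂μ := by
  have hfg : Integrable (fun x => f x - g x) μ := hf.sub hg
  have hfgh : Integrable (fun x => f x - g x + c * h x) μ := hfg.add (hh.const_mul c)
  rw [integral_sub hfgh (hk.const_mul c), integral_add hfg (hh.const_mul c), integral_sub hf hg,
    integral_const_mul, integral_const_mul]

/-- Cauchy's theorem on the squares `x + {a + is : a, s ∈ [0, 1]}·v`, integrated over `x`: by
translation invariance the two vertical sides contribute equally and cancel. -/
theorem integral_ofReIm_add_eq {H : (ι → ℂ) → ℂ} {y v : ι → ℝ}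
    (hH : DifferentiableOn ℂ H (tube (segment ℝ y (y + v)))) {C : ℝ≥0∞} (hC : C ≠ ⊤)
    (hb : ∀ w ∈ segment ℝ y (y + v), ∫⁻ x, ‖H (ofReIm x w)‖ₑ ≤ C) :
    ∫ x, H (ofReIm x (y + v)) = ∫ x, H (ofReIm x y) := by
  have side {α β : ℝ → ℝ} (hα : Continuous α) (hβ : Continuous β)
      (hβI : MapsTo β (Icc 0 1) (Icc 0 1)) :=
    integral_intervalIntegral_shift hH.continuousOn hC hb hα hβ hβI
  obtain ⟨bottom, hbottom⟩ := side continuous_id (continuous_const (y := 0)) fun _ _ => by simp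
  obtain ⟨top, htop⟩ := side continuous_id (continuous_const (y := 1)) fun _ _ => by simp
  obtain ⟨right, hright⟩ := side (continuous_const (y := 1)) continuous_id (mapsTo_id _)
  obtain ⟨left, hleft⟩ := side (continuous_const (y := 0)) continuous_id (mapsTo_id _)
  simp only [id] at *
  have htotal := integral_congr_ae (μ := (volume : Measure (ι → ℝ)))
    (.of_forall (integral_boundary_square_eq_zero hH))
  rw [integral_sub_add_const_mul_sub_const_mul bottom top right left, hbottom, htop, hright,
    hleft] at htotal
  exact (sub_eq_zero.1 (by simpa using htotal)).symm

theorem integral_ofReIm_eq {H : (ι → ℂ) → ℂ} {y y' : ι → ℝ}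
    (hH : DifferentiableOn ℂ H (tube (segment ℝ y y'))) {C : ℝ≥0∞} (hC : C ≠ ⊤)
    (hb : ∀ w ∈ segment ℝ y y', ∫⁻ x, ‖H (ofReIm x w)‖ₑ ≤ C) :
    ∫ x, H (ofReIm x y') = ∫ x, H (ofReIm x y) := by
  obtain ⟨v, rfl⟩ : ∃ v, y' = y + v := ⟨y' - y, (add_sub_cancel y y').symm⟩
  exact integral_ofReIm_add_eq hH hC hb

end ContourShift

section GaussianRegularization

open Filter Topology

variable {ι : Type*} [Fintype ι]

/-- The regularisation of `F` by the entire Gaussian `e^{-ε ∑ zᵢ²}`, which makes square integrable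
slices integrable. -/
def gaussReg (F : (ι → ℂ) → ℂ) (ε : ℝ) (z : ι → ℂ) : ℂ :=
  F z * Complex.exp (-(ε * ∑ i, z i ^ 2))

/-- The real Gaussian `e^{-ε|x|²}`. -/
def realGaussian (ε : ℝ) (x : ι → ℝ) : ℝ := Real.exp (-(ε * (x ⬝ᵥ x)))

theorem norm_gaussReg_ofReIm (F : (ι → ℂ) → ℂ) (ε : ℝ) (x y : ι → ℝ) :
    ‖gaussReg F ε (ofReIm x y)‖
      = Real.exp (ε * (y ⬝ᵥ y)) * ‖realGaussian ε x * F (ofReIm x y)‖ := by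
  have hre : (∑ i, ofReIm x y i ^ 2).re = x ⬝ᵥ x - y ⬝ᵥ y := by
    simp only [dotProduct, Complex.re_sum, ← Finset.sum_sub_distrib]
    exact Finset.sum_congr rfl fun i _ => by simp [ofReIm, pow_two]
  rw [gaussReg, norm_mul, norm_mul, Complex.norm_real, realGaussian,
    Real.norm_of_nonneg (Real.exp_pos _).le, ← mul_assoc, ← Real.exp_add, Complex.norm_exp,
    Complex.neg_re, Complex.re_ofReal_mul, hre, mul_comm]
  ring_nf

theorem norm_gaussReg_le (F : (ι → ℂ) → ℂ) {ε : ℝ} (hε : 0 ≤ ε) (hε1 : ε ≤ 1) (x y : ι → ℝ) :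
    ‖gaussReg F ε (ofReIm x y)‖ ≤ Real.exp (y ⬝ᵥ y) * ‖F (ofReIm x y)‖ := by
  have hx : 0 ≤ x ⬝ᵥ x := by simpa using dotProduct_self_star_nonneg x
  have hy : 0 ≤ y ⬝ᵥ y := by simpa using dotProduct_self_star_nonneg y
  rw [norm_gaussReg_ofReIm, norm_mul, Complex.norm_real, realGaussian,
    Real.norm_of_nonneg (Real.exp_pos _).le]
  gcongr
  · exact mul_le_of_le_one_left hy hε1
  · exact mul_le_of_le_one_left (norm_nonneg _) (Real.exp_le_one_iff.2 (by nlinarith))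

theorem integrable_realGaussian {ε : ℝ} (hε : 0 < ε) :
    Integrable (realGaussian (ι := ι) ε) := by
  have : realGaussian (ι := ι) ε = fun x => ∏ i, Real.exp (-ε * (x i) ^ 2) := by
    ext x
    rw [realGaussian, ← Real.exp_sum, dotProduct, ← neg_mul, Finset.mul_sum]
    simp only [pow_two]
  rw [this]
  exact Integrable.fintype_prod (f := fun _ s => Real.exp (-ε * s ^ 2))
    fun _ => integrable_exp_neg_mul_sq hε

theorem memLp_two_realGaussian {ε : ℝ} (hε : 0 < ε) :
    MemLp (fun x : ι → ℝ => (realGaussian ε x : ℂ)) 2 := by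
  have hm : Continuous fun x : ι → ℝ => (realGaussian ε x : ℂ) := by
    unfold realGaussian dotProduct; fun_prop
  rw [memLp_two_iff_integrable_sq_norm hm.aestronglyMeasurable]
  refine (integrable_realGaussian (mul_pos two_pos hε)).congr (.of_forall fun x => ?_)
  simp only [Complex.norm_real, realGaussian, Real.norm_of_nonneg (Real.exp_pos _).le]
  rw [sq, ← Real.exp_add]
  ring_nf

theorem differentiableOn_gaussReg {s : Set (ι → ℂ)} {F : (ι → ℂ) → ℂ}
    (hF : DifferentiableOn ℂ F s) (ε : ℝ) : DifferentiableOn ℂ (gaussReg F ε) s :=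
  hF.mul (by fun_prop)

theorem tendsto_gaussReg (F : (ι → ℂ) → ℂ) (z : ι → ℂ) :
    Tendsto (fun ε => gaussReg F ε z) (𝓝 0) (𝓝 (F z)) := by
  have h : Continuous fun ε : ℝ => gaussReg F ε z := by unfold gaussReg; fun_prop
  simpa [gaussReg] using h.tendsto 0

theorem eLpNorm_two_sq {X E : Type*} [MeasurableSpace X] {μ : Measure X} [NormedAddCommGroup E]
    (f : X → E) : eLpNorm f 2 μ ^ 2 = ∫⁻ x, ‖f x‖ₑ ^ 2 ∂μ := by
  simpa using eLpNorm_nnreal_pow_eq_lintegral (μ := μ) (f := f) (p := 2) two_ne_zero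

theorem lintegral_enorm_sq_le_measure_univ_mul {X E : Type*} [MeasurableSpace X]
    [NormedAddCommGroup E] {ν : Measure X} {φ : X → E} (hφ : AEStronglyMeasurable φ ν) :
    (∫⁻ x, ‖φ x‖ₑ ∂ν) ^ 2 ≤ ν univ * ∫⁻ x, ‖φ x‖ₑ ^ 2 ∂ν := by
  have h := eLpNorm_le_eLpNorm_mul_rpow_measure_univ (p := 1) (q := 2) one_le_two hφ
  rw [eLpNorm_one_eq_lintegral_enorm] at h
  refine (pow_le_pow_left₀ zero_le h 2).trans_eq ?_
  rw [mul_pow, eLpNorm_two_sq, ← ENNReal.rpow_natCast _ 2, ← ENNReal.rpow_mul, mul_comm]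
  norm_num

theorem lintegral_enorm_mul_le_eLpNorm_two {X : Type*} [MeasurableSpace X] {μ : Measure X}
    {f g : X → ℂ} (hf : AEStronglyMeasurable f μ) (hg : AEStronglyMeasurable g μ) :
    ∫⁻ x, ‖f x * g x‖ₑ ∂μ ≤ eLpNorm f 2 μ * eLpNorm g 2 μ := by
  have h : eLpNorm (f • g) 1 μ ≤ eLpNorm f 2 μ * eLpNorm g 2 μ :=
    eLpNorm_smul_le_mul_eLpNorm hg hf
  rwa [eLpNorm_one_eq_lintegral_enorm] at h

theorem tendsto_eLpNorm_two_sub_of_dominated {X E : Type*} [MeasurableSpace X] {μ : Measure X}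
    [NormedAddCommGroup E] {f : ℕ → X → E} {g : X → E} {c : ℝ}
    (hf : ∀ n, AEStronglyMeasurable (f n) μ) (hg : MemLp g 2 μ)
    (hfg : ∀ n x, ‖f n x‖ ≤ c * ‖g x‖) (hlim : ∀ x, Tendsto (fun n => f n x) atTop (𝓝 (g x))) :
    Tendsto (fun n => eLpNorm (f n - g) 2 μ) atTop (𝓝 0) := by
  have hsq : Tendsto (fun n => ∫⁻ x, ‖f n x - g x‖ₑ ^ 2 ∂μ) atTop (𝓝 (∫⁻ _, 0 ∂μ)) := by
    refine tendsto_lintegral_of_dominated_convergence' (fun x => ‖(c + 1) * ‖g x‖‖ₑ ^ 2)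
      (fun n => ((hf n).sub hg.1).enorm.pow_const 2) (fun n => .of_forall fun x => ?_) ?_
      (.of_forall fun x => ?_)
    · refine pow_le_pow_left₀ zero_le ?_ 2
      refine enorm_le_iff_norm_le.2 ((norm_sub_le _ _).trans (le_trans ?_ (Real.le_norm_self _)))
      linarith [hfg n x]
    · rw [← eLpNorm_two_sq]
      exact ENNReal.pow_ne_top (hg.norm.const_mul (c + 1)).2.ne
    · have h := ((hlim x).sub_const (g x)).enorm
      rw [sub_self, enorm_zero] at h
      simpa [Function.comp_def] using ((ENNReal.continuous_pow 2).tendsto _).comp h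
  have hroot := ((ENNReal.continuous_rpow_const (y := 2⁻¹)).tendsto _).comp hsq
  simp only [lintegral_zero, Function.comp_def, ENNReal.zero_rpow_of_pos (inv_pos.2 two_pos)]
    at hroot
  refine hroot.congr fun n => ?_
  rw [← ENNReal.pow_rpow_inv_natCast two_ne_zero (eLpNorm (f n - g) 2 μ), eLpNorm_two_sq]
  simp

/-- Convergence in `L²` passes through measure to almost everywhere along a subsequence, so it
preserves pointwise proportionality. -/
theorem ae_eq_mul_of_tendsto_eLpNorm_two {X : Type*} [MeasurableSpace X] {μ : Measure X}
    {u v : ℕ → X → ℂ} {u' v' c : X → ℂ} (hu : ∀ n, AEStronglyMeasurable (u n) μ)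
    (hv : ∀ n, AEStronglyMeasurable (v n) μ) (hu' : AEStronglyMeasurable u' μ)
    (hv' : AEStronglyMeasurable v' μ) (huv : ∀ n x, u n x = c x * v n x)
    (hulim : Tendsto (fun n => eLpNorm (u n - u') 2 μ) atTop (𝓝 0))
    (hvlim : Tendsto (fun n => eLpNorm (v n - v') 2 μ) atTop (𝓝 0)) :
    u' =ᵐ[μ] fun x => c x * v' x := by
  obtain ⟨ns, hns, hu_ae⟩ :=
    (tendstoInMeasure_of_tendsto_eLpNorm two_ne_zero hu hu' hulim).exists_seq_tendsto_ae
  obtain ⟨ms, hms, hv_ae⟩ := (tendstoInMeasure_of_tendsto_eLpNorm two_ne_zero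
    (fun n => hv (ns n)) hv' (hvlim.comp hns.tendsto_atTop)).exists_seq_tendsto_ae
  filter_upwards [hu_ae, hv_ae] with x hux hvx
  refine tendsto_nhds_unique (hux.comp hms.tendsto_atTop) ?_
  simpa only [Function.comp_def, huv] using hvx.const_mul (c x)

section Slices

variable {Ω : Set (ι → ℝ)} {F : (ι → ℂ) → ℂ}

theorem memLp_gaussReg (hF : ContinuousOn F (tube Ω)) {y : ι → ℝ} (hy : y ∈ Ω)
    (hFy : MemLp (fun x => F (ofReIm x y)) 2) {ε : ℝ} (hε : 0 ≤ ε) (hε1 : ε ≤ 1) :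
    MemLp (fun x => gaussReg F ε (ofReIm x y)) 2 :=
  hFy.of_le_mul ((continuous_comp_ofReIm (F := gaussReg F ε) (hF.mul (by fun_prop))
    hy).aestronglyMeasurable) (.of_forall fun x => norm_gaussReg_le F hε hε1 x y)

theorem integrable_gaussReg (hF : ContinuousOn F (tube Ω)) {y : ι → ℝ} (hy : y ∈ Ω)
    (hFy : MemLp (fun x => F (ofReIm x y)) 2) {ε : ℝ} (hε : 0 < ε) :
    Integrable fun x => gaussReg F ε (ofReIm x y) :=
  (((memLp_two_realGaussian hε).integrable_mul hFy).norm.const_mul _).mono'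
    ((continuous_comp_ofReIm (F := gaussReg F ε) (hF.mul (by fun_prop)) hy).aestronglyMeasurable)
    (.of_forall fun x => (norm_gaussReg_ofReIm F ε x y).le)

theorem tendsto_eLpNorm_gaussReg_sub (hF : ContinuousOn F (tube Ω)) {y : ι → ℝ} (hy : y ∈ Ω)
    (hFy : MemLp (fun x => F (ofReIm x y)) 2) {e : ℕ → ℝ} (he : Tendsto e atTop (𝓝 0))
    (he01 : ∀ n, e n ∈ Icc (0 : ℝ) 1) :
    Tendsto
      (fun n => eLpNorm ((fun x => gaussReg F (e n) (ofReIm x y)) - fun x => F (ofReIm x y)) 2)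
      atTop (𝓝 0) :=
  tendsto_eLpNorm_two_sub_of_dominated
    (fun n => (memLp_gaussReg hF hy hFy (he01 n).1 (he01 n).2).aestronglyMeasurable) hFy
    (fun n x => norm_gaussReg_le F (he01 n).1 (he01 n).2 x y)
    fun x => (tendsto_gaussReg F (ofReIm x y)).comp he

end Slices

end GaussianRegularization

section PaleyWiener

open Filter Topology

variable {ι : Type*} [Fintype ι] {Ω : Set (ι → ℝ)}

theorem expWeight_neg_right (y t : ι → ℝ) : expWeight y (-t) = expWeight (-y) t := by
  rw [expWeight, expWeight, dotProduct_neg, neg_dotProduct]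

theorem expWeight_neg_mul_self (y t : ι → ℝ) : expWeight (-y) t * expWeight y t = 1 := by
  rw [← expWeight_add, neg_add_cancel]
  simp [expWeight]

theorem expKernel_ofReIm_zero_comm (x t : ι → ℝ) :
    expKernel (ofReIm x 0) t = expKernel (ofReIm t 0) x := by
  simp only [expKernel, dotProduct, ofReIm, Pi.zero_apply, Complex.ofReal_zero, zero_mul, add_zero,
    mul_comm (x _ : ℂ)]

theorem expKernel_neg_ofReIm (x y t : ι → ℝ) :
    expKernel (ofReIm x y) (-t) = expWeight (-y) t * expKernel (ofReIm (-t) 0) x := by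
  rw [expKernel_ofReIm, expKernel_ofReIm_zero_comm, expWeight_neg_right, mul_comm]

theorem enorm_expKernel_mul_gaussReg (F : (ι → ℂ) → ℂ) (ε : ℝ) (x w t : ι → ℝ) :
    ‖expKernel (ofReIm x w) t * gaussReg F ε (ofReIm x w)‖ₑ
      = ‖expWeight w t * Real.exp (ε * (w ⬝ᵥ w))‖ₑ
        * ‖realGaussian ε x * F (ofReIm x w)‖ₑ := by
  rw [← ofReal_norm, ← ofReal_norm, ← ofReal_norm, ← ENNReal.ofReal_mul (norm_nonneg _), norm_mul,
    norm_gaussReg_ofReIm, norm_expKernel, Real.norm_of_nonneg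
      (mul_nonneg (expWeight_pos w t).le (Real.exp_pos _).le), mul_assoc]
  simp [ofReIm]

theorem exists_lintegral_expKernel_mul_gaussReg_le {F : (ι → ℂ) → ℂ} {K : Set (ι → ℝ)}
    (hK : IsCompact K) (hF : ContinuousOn F (tube K)) {C : ℝ≥0∞} (hC : C ≠ ⊤)
    (hb : ∀ w ∈ K, eLpNorm (fun x => F (ofReIm x w)) 2 ≤ C) {ε : ℝ} (hε : 0 < ε) (t : ι → ℝ) :
    ∃ D : ℝ≥0∞, D ≠ ⊤ ∧ ∀ w ∈ K,
      ∫⁻ x, ‖expKernel (ofReIm x w) t * gaussReg F ε (ofReIm x w)‖ₑ ≤ D := by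
  have hcont : Continuous fun w => expWeight w t * Real.exp (ε * (w ⬝ᵥ w)) := by
    unfold expWeight dotProduct; fun_prop
  obtain ⟨M, hM⟩ := hK.exists_bound_of_continuousOn hcont.continuousOn
  have hgauss := memLp_two_realGaussian (ι := ι) hε
  have hD : ENNReal.ofReal M * (eLpNorm (fun x : ι → ℝ => (realGaussian ε x : ℂ)) 2 * C) ≠ ⊤ :=
    ENNReal.mul_ne_top ENNReal.ofReal_ne_top (ENNReal.mul_ne_top hgauss.2.ne hC)
  refine ⟨_, hD, fun w hw => ?_⟩
  simp only [enorm_expKernel_mul_gaussReg]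
  rw [lintegral_const_mul' _ _ enorm_ne_top]
  refine mul_le_mul' ?_ ?_
  · rw [← ofReal_norm]
    exact ENNReal.ofReal_le_ofReal (hM w hw)
  · exact (lintegral_enorm_mul_le_eLpNorm_two hgauss.1
      (continuous_comp_ofReIm hF hw).aestronglyMeasurable).trans (mul_le_mul_right (hb w hw) _)

theorem fourierLaplace_gaussReg_eq_expWeight_mul {F : (ι → ℂ) → ℂ} {y y' : ι → ℝ}
    (hF : DifferentiableOn ℂ F (tube (segment ℝ y y'))) {C : ℝ≥0∞} (hC : C ≠ ⊤)
    (hb : ∀ w ∈ segment ℝ y y', eLpNorm (fun x => F (ofReIm x w)) 2 ≤ C) {ε : ℝ} (hε : 0 < ε)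
    (t : ι → ℝ) :
    fourierLaplace (fun x => gaussReg F ε (ofReIm x y')) (ofReIm (-t) 0)
      = expWeight (y' - y) t
        * fourierLaplace (fun x => gaussReg F ε (ofReIm x y)) (ofReIm (-t) 0) := by
  have hcompact : IsCompact (segment ℝ y y') := by
    rw [segment_eq_image']
    exact isCompact_Icc.image (by fun_prop)
  obtain ⟨D, hD, hDb⟩ :=
    exists_lintegral_expKernel_mul_gaussReg_le hcompact hF.continuousOn hC hb hε (-t)
  have hH : DifferentiableOn ℂ (fun z => expKernel z (-t) * gaussReg F ε z)
      (tube (segment ℝ y y')) :=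
    DifferentiableOn.mul (by unfold expKernel dotProduct; fun_prop)
      (differentiableOn_gaussReg hF ε)
  have hshift := integral_ofReIm_eq hH hD hDb
  simp only [expKernel_neg_ofReIm, mul_assoc, integral_const_mul] at hshift
  rw [sub_eq_add_neg, expWeight_add, Complex.ofReal_mul, mul_assoc]
  unfold fourierLaplace
  rw [← hshift, ← mul_assoc, ← Complex.ofReal_mul, mul_comm (expWeight y' t),
    expWeight_neg_mul_self, Complex.ofReal_one, one_mul]

theorem tendsto_fourierLaplace_gaussReg {F : (ι → ℂ) → ℂ} (hF : ContinuousOn F (tube Ω))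
    {y : ι → ℝ} (hy : y ∈ Ω) (hFy : MemLp (fun x => F (ofReIm x y)) 2) {e : ℕ → ℝ}
    (he : Tendsto e atTop (𝓝 0)) (he01 : ∀ n, e n ∈ Ioc (0 : ℝ) 1) :
    (∀ n, AEStronglyMeasurable (fun t =>
      fourierLaplace (fun x => gaussReg F (e n) (ofReIm x y)) (ofReIm (-t) 0)) volume) ∧
    Tendsto (fun n => eLpNorm ((fun t =>
      fourierLaplace (fun x => gaussReg F (e n) (ofReIm x y)) (ofReIm (-t) 0))
        - fourierL2 hFy) 2) atTop (𝓝 0) := by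
  have h1 (n : ℕ) := integrable_gaussReg hF hy hFy (he01 n).1
  have h2 (n : ℕ) := memLp_gaussReg hF hy hFy (he01 n).1.le (he01 n).2
  refine ⟨fun n => (memLp_fourierL2 (h2 n)).1.congr (fourierL2_ae_eq (h1 n) (h2 n)), ?_⟩
  refine (tendsto_eLpNorm_gaussReg_sub hF hy hFy he fun n => Ioc_subset_Icc_self (he01 n)).congr
    fun n => ?_
  exact (eLpNorm_fourierLaplace_sub_fourierL2 hFy (h1 n) (h2 n)).symm

theorem fourierL2_ae_eq_expWeight_mul {F : (ι → ℂ) → ℂ} {y y' : ι → ℝ}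
    (hF : DifferentiableOn ℂ F (tube (segment ℝ y y'))) {C : ℝ≥0∞} (hC : C ≠ ⊤)
    (hb : ∀ w ∈ segment ℝ y y', eLpNorm (fun x => F (ofReIm x w)) 2 ≤ C)
    (hFy : MemLp (fun x => F (ofReIm x y)) 2) (hFy' : MemLp (fun x => F (ofReIm x y')) 2) :
    fourierL2 hFy' =ᵐ[volume] fun t => (expWeight (y' - y) t : ℂ) * fourierL2 hFy t := by
  let e (n : ℕ) : ℝ := 1 / (n + 1)
  have he01 (n : ℕ) : e n ∈ Ioc (0 : ℝ) 1 :=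
    ⟨Nat.one_div_pos_of_nat, (div_le_one (by positivity)).2 (by simp)⟩
  have he : Tendsto e atTop (𝓝 0) := tendsto_one_div_add_atTop_nhds_zero_nat
  obtain ⟨hm, hlim⟩ := tendsto_fourierLaplace_gaussReg hF.continuousOn (left_mem_segment ℝ y y')
    hFy he he01
  obtain ⟨hm', hlim'⟩ := tendsto_fourierLaplace_gaussReg hF.continuousOn
    (right_mem_segment ℝ y y') hFy' he he01
  exact ae_eq_mul_of_tendsto_eLpNorm_two hm' hm (memLp_fourierL2 hFy').1 (memLp_fourierL2 hFy).1
    (fun n t => fourierLaplace_gaussReg_eq_expWeight_mul hF hC hb (he01 n).1 t) hlim' hlim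

theorem tubeIntegrable_of_memLp_two (hΩ : IsOpen Ω) {f : (ι → ℝ) → ℂ}
    (hf : ∀ y ∈ Ω, MemLp (fun t => (expWeight y t : ℂ) * f t) 2) : TubeIntegrable Ω f := by
  intro y hy
  obtain ⟨δ, hδ, s, hs, hle⟩ := exists_finset_expWeight_le hΩ hy
  have hcorners : Integrable fun t =>
      ∑ v ∈ s, ‖(expDecay δ t : ℂ) * ((expWeight v t : ℂ) * f t)‖ :=
    integrable_finsetSum s fun v hv => ((memLp_two_expDecay hδ).integrable_mul (hf v (hs hv))).norm
  refine hcorners.mono' (hf y hy).1 (.of_forall fun t => ?_)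
  calc ‖(expWeight y t : ℂ) * f t‖
      = expWeight y t * ‖f t‖ := by rw [norm_mul, norm_expWeight]
    _ ≤ (expDecay δ t * ∑ v ∈ s, expWeight v t) * ‖f t‖ := by
        gcongr
        exact hle y t (by simpa using hδ.le)
    _ = ∑ v ∈ s, ‖(expDecay δ t : ℂ) * ((expWeight v t : ℂ) * f t)‖ := by
        simp only [norm_mul, norm_expWeight, ← mul_assoc, Finset.mul_sum, Finset.sum_mul]
        rw [Complex.norm_of_nonneg (expDecay_pos δ t).le]

/-- Paley–Wiener: `f` is `e^{2π y·t}` times the Fourier transform of the slice at height `y`, which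
a contour shift shows to be independent of `y`. -/
theorem exists_eqOn_fourierLaplace (hΩ : IsOpen Ω) (hconv : Convex ℝ Ω) (hne : Ω.Nonempty)
    {F : (ι → ℂ) → ℂ} (hF : DifferentiableOn ℂ F (tube Ω))
    (hb : ∀ y ∈ Ω, ∀ y' ∈ Ω, ∃ C : ℝ≥0∞, C ≠ ⊤ ∧
      ∀ w ∈ segment ℝ y y', eLpNorm (fun x => F (ofReIm x w)) 2 ≤ C) :
    ∃ f : (ι → ℝ) → ℂ, TubeIntegrable Ω f ∧ EqOn F (fourierLaplace f) (tube Ω) ∧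
      ∀ y ∈ Ω, eLpNorm (fun t => (expWeight y t : ℂ) * f t) 2
        = eLpNorm (fun x => F (ofReIm x y)) 2 := by
  have hmem (y) (hy : y ∈ Ω) : MemLp (fun x => F (ofReIm x y)) 2 := by
    obtain ⟨C, hC, hbC⟩ := hb y hy y hy
    exact ⟨(continuous_comp_ofReIm hF.continuousOn hy).aestronglyMeasurable,
      (hbC y (left_mem_segment ℝ y y)).trans_lt hC.lt_top⟩
  obtain ⟨y₀, hy₀⟩ := hne
  let f (t : ι → ℝ) : ℂ := expWeight (-y₀) t * fourierL2 (hmem y₀ hy₀) t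
  have hslice (y) (hy : y ∈ Ω) :
      (fun t => (expWeight y t : ℂ) * f t) =ᵐ[volume] fourierL2 (hmem y hy) := by
    obtain ⟨C, hC, hbC⟩ := hb y₀ hy₀ y hy
    refine .trans (.of_forall fun t => ?_) (fourierL2_ae_eq_expWeight_mul
      (hF.mono fun z hz => hconv.segment_subset hy₀ hy hz) hC hbC (hmem y₀ hy₀) (hmem y hy)).symm
    simp only [f, sub_eq_add_neg, expWeight_add, Complex.ofReal_mul, mul_assoc]
  have hint : TubeIntegrable Ω f := tubeIntegrable_of_memLp_two hΩ fun y hy =>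
    (memLp_congr_ae (hslice y hy)).2 (memLp_fourierL2 _)
  refine ⟨f, hint, fun z hz => ?_, fun y hy => (eLpNorm_congr_ae (hslice y hy)).trans
    (eLpNorm_fourierL2 _)⟩
  obtain ⟨x, y, hy, rfl⟩ : ∃ x y, y ∈ Ω ∧ ofReIm x y = z := ⟨_, _, hz, ofReIm_re_im z⟩
  have hae : (fun x => F (ofReIm x y)) =ᵐ[volume] fun x => fourierLaplace f (ofReIm x y) := by
    refine (ae_eq_fourierLaplace_fourierL2 (hmem y hy) ((hint y hy).congr (hslice y hy))).trans
      (.of_forall fun x => ?_)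
    simp only [fourierLaplace_ofReIm f x y]
    exact integral_congr_ae ((hslice y hy).symm.mono fun t ht => congrArg _ ht)
  exact congrFun ((Continuous.ae_eq_iff_eq volume (continuous_comp_ofReIm hF.continuousOn hy)
    (continuous_comp_ofReIm (hint.differentiableOn hΩ).continuousOn hy)).1 hae) x

end PaleyWiener

section BoxOperator

open Filter Topology
open scoped Real

theorem isOpen_Sigma3 : IsOpen Sigma3 :=
  (isOpen_lt (f := fun _ => (0 : ℝ)) (g := fun y : Fin 3 → ℝ => y 0 * y 1 - y 2 ^ 2)
    (by fun_prop) (by fun_prop)).inter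
    (isOpen_lt (f := fun _ => (0 : ℝ)) (g := fun y : Fin 3 → ℝ => y 0) (by fun_prop) (by fun_prop))

theorem isOpen_TSigma : IsOpen TSigma := isOpen_tube isOpen_Sigma3

theorem pos_one_of_mem_Sigma3 {y : Fin 3 → ℝ} (hy : y ∈ Sigma3) : 0 < y 1 := by
  obtain ⟨hdet, h0⟩ := hy
  exact pos_of_mul_pos_right (by linarith [sq_nonneg (y 2)]) h0.le

-- AM-GM on the mixed terms: `2 y₂ y'₂ ≤ 2 √(y₀ y'₁ · y₁ y'₀) ≤ y₀ y'₁ + y₁ y'₀`.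
theorem add_mem_Sigma3 {y y' : Fin 3 → ℝ} (hy : y ∈ Sigma3) (hy' : y' ∈ Sigma3) :
    y + y' ∈ Sigma3 := by
  have h1 := pos_one_of_mem_Sigma3 hy
  have h1' := pos_one_of_mem_Sigma3 hy'
  obtain ⟨hdet, h0⟩ := hy
  obtain ⟨hdet', h0'⟩ := hy'
  have hmixed : 2 * (y 2 * y' 2) ≤ y 0 * y' 1 + y 1 * y' 0 := by
    have hprod : y 2 ^ 2 * y' 2 ^ 2 ≤ (y 0 * y 1) * (y' 0 * y' 1) := by
      gcongr <;> linarith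
    refine le_of_sq_le_sq ?_ (by positivity)
    nlinarith [sq_nonneg (y 0 * y' 1 - y 1 * y' 0)]
  refine ⟨?_, add_pos h0 h0'⟩
  simp only [Pi.add_apply]
  nlinarith

theorem smul_mem_Sigma3 {y : Fin 3 → ℝ} (hy : y ∈ Sigma3) {c : ℝ} (hc : 0 < c) :
    c • y ∈ Sigma3 := by
  refine ⟨?_, mul_pos hc hy.2⟩
  calc 0 < c ^ 2 * (y 0 * y 1 - y 2 ^ 2) := mul_pos (pow_pos hc 2) hy.1
    _ = (c • y) 0 * (c • y) 1 - (c • y) 2 ^ 2 := by simp only [Pi.smul_apply, smul_eq_mul]; ring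

theorem convex_Sigma3 : Convex ℝ Sigma3 :=
  convex_iff_forall_pos.2 fun _ hy _ hy' _ _ ha hb _ =>
    add_mem_Sigma3 (smul_mem_Sigma3 hy ha) (smul_mem_Sigma3 hy' hb)

theorem vec_zero_mem_Sigma3 {a b : ℝ} (ha : 0 < a) (hb : 0 < b) : ![a, b, 0] ∈ Sigma3 := by
  simp [Sigma3, ha, hb]

/-- The Fourier symbol of `□`: it multiplies `e^{2πi z·t}` by `4π²(4t₀t₁ - t₂²)`. -/
def boxSymbol (t : Fin 3 → ℝ) : ℝ := 4 * π ^ 2 * (4 * t 0 * t 1 - t 2 ^ 2)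

theorem pd_congr {F G : (Fin 3 → ℂ) → ℂ} (h : EqOn F G TSigma) (i : Fin 3) :
    EqOn (pd i F) (pd i G) TSigma := fun z hz => by
  simp only [pd, (h.eventuallyEq_of_mem (isOpen_TSigma.mem_nhds hz)).fderiv_eq]

theorem BoxS_congr {F G : (Fin 3 → ℂ) → ℂ} (h : EqOn F G TSigma) :
    EqOn (BoxS F) (BoxS G) TSigma := fun z hz => by
  simp only [BoxS, pd_congr (pd_congr h 1) 0 hz, pd_congr (pd_congr h 2) 2 hz]

theorem boxSymbol_mul_eq (f : (Fin 3 → ℝ) → ℂ) (t : Fin 3 → ℝ) :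
    boxSymbol t * f t
      = -4 * (2 * π * Complex.I * t 0 * (2 * π * Complex.I * t 1 * f t))
        + 2 * π * Complex.I * t 2 * (2 * π * Complex.I * t 2 * f t) := by
  simp only [boxSymbol]
  push_cast
  linear_combination
    (4 * 4 * π ^ 2 * t 0 * t 1 - 4 * π ^ 2 * t 2 ^ 2) * f t * Complex.I_sq

theorem TubeIntegrable.boxSymbol_mul {f : (Fin 3 → ℝ) → ℂ} (hf : TubeIntegrable Sigma3 f) :
    TubeIntegrable Sigma3 fun t => boxSymbol t * f t := by
  have h (i j : Fin 3) := (hf.coord_mul isOpen_Sigma3 j).coord_mul isOpen_Sigma3 i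
  simp only [boxSymbol_mul_eq]
  exact ((h 0 1).const_mul (-4)).add (h 2 2)

theorem BoxS_fourierLaplace {f : (Fin 3 → ℝ) → ℂ} (hf : TubeIntegrable Sigma3 f) :
    EqOn (BoxS (fourierLaplace f)) (fourierLaplace fun t => boxSymbol t * f t) TSigma := by
  intro z hz
  have hpd {g : (Fin 3 → ℝ) → ℂ} (hg : TubeIntegrable Sigma3 g) (i : Fin 3) :
      EqOn (pd i (fourierLaplace g)) (fourierLaplace fun t => 2 * π * Complex.I * t i * g t)
        TSigma := fun _ hz => hg.fderiv_single isOpen_Sigma3 hz i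
  have h (j : Fin 3) := hf.coord_mul isOpen_Sigma3 j
  have h' (i j : Fin 3) := (h j).coord_mul isOpen_Sigma3 i
  simp only [boxSymbol_mul_eq]
  rw [fourierLaplace_add ((h' 0 1).const_mul (-4)) (h' 2 2) hz, fourierLaplace_const_mul, BoxS,
    pd_congr (hpd hf 1) 0 hz, pd_congr (hpd hf 2) 2 hz, hpd (h 1) 0 hz, hpd (h 2) 2 hz]

theorem TubeIntegrable.boxSymbol_pow_mul {f : (Fin 3 → ℝ) → ℂ} (hf : TubeIntegrable Sigma3 f)
    (m : ℕ) : TubeIntegrable Sigma3 fun t => (boxSymbol t : ℂ) ^ m * f t := by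
  induction m with
  | zero => simpa using hf
  | succ n ih => simpa only [pow_succ', mul_assoc] using ih.boxSymbol_mul

theorem iterate_BoxS_eqOn {f : (Fin 3 → ℝ) → ℂ} (hf : TubeIntegrable Sigma3 f)
    {F : (Fin 3 → ℂ) → ℂ} (hF : EqOn F (fourierLaplace f) TSigma) (m : ℕ) :
    EqOn (BoxS^[m] F) (fourierLaplace fun t => (boxSymbol t : ℂ) ^ m * f t) TSigma := by
  induction m with
  | zero => simpa using hF
  | succ n ih =>
    simp only [Function.iterate_succ_apply', pow_succ', mul_assoc]
    exact (BoxS_congr ih).trans (BoxS_fourierLaplace (hf.boxSymbol_pow_mul n))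

end BoxOperator

section Coordinates

theorem measurePreserving_ofReIm {ι : Type*} [Fintype ι] :
    MeasurePreserving (fun p : (ι → ℝ) × (ι → ℝ) => ofReIm p.1 p.2) := by
  have hpi := volume_preserving_pi fun _ : ι => Complex.volume_preserving_equiv_real_prod.symm
  convert hpi.comp (volume_measurePreserving_arrowProdEquivProdArrow ℝ ℝ ι).symm using 1
  ext p i
  apply Complex.ext <;>
    simp [ofReIm, Complex.measurableEquivRealProd, MeasurableEquiv.arrowProdEquivProdArrow,
      Equiv.arrowProdEquivProdArrow]

theorem measurableEmbedding_ofReIm {ι : Type*} [Countable ι] :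
    MeasurableEmbedding fun p : (ι → ℝ) × (ι → ℝ) => ofReIm p.1 p.2 :=
  continuous_ofReIm.measurable.measurableEmbedding fun p q h => by
    refine Prod.ext (funext fun i => ?_) (funext fun i => ?_)
    · simpa [ofReIm] using congrArg Complex.re (congrFun h i)
    · simpa [ofReIm] using congrArg Complex.im (congrFun h i)

/-- The open first quadrant, the base of the tube `Π⁺×Π⁺`. -/
def quadrant : Set (Fin 2 → ℝ) := {y | 0 < y 0 ∧ 0 < y 1}

theorem isOpen_quadrant : IsOpen quadrant :=
  (isOpen_lt continuous_const (continuous_apply 0)).inter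
    (isOpen_lt continuous_const (continuous_apply 1))

theorem isOpen_UHP : IsOpen UHP := isOpen_lt continuous_const Complex.continuous_im

theorem finTwoArrow_ofReIm_mem {x y : Fin 2 → ℝ} :
    (ofReIm x y 0, ofReIm x y 1) ∈ UHP ×ˢ UHP ↔ y ∈ quadrant := by
  simp [UHP, quadrant, ofReIm]

theorem setLIntegral_UHP_prod {H : ℂ × ℂ → ℝ≥0∞}
    (hH : AEMeasurable H (volume.restrict (UHP ×ˢ UHP))) :
    ∫⁻ p in UHP ×ˢ UHP, H p
      = ∫⁻ y in quadrant, ∫⁻ x : Fin 2 → ℝ, H (ofReIm x y 0, ofReIm x y 1) := by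
  have hpres := (volume_preserving_finTwoArrow ℂ).comp measurePreserving_ofReIm
  have hemb := MeasurableEquiv.finTwoArrow.measurableEmbedding.comp
    (measurableEmbedding_ofReIm (ι := Fin 2))
  have hpre : (MeasurableEquiv.finTwoArrow ∘ fun p : (Fin 2 → ℝ) × (Fin 2 → ℝ) =>
      ofReIm p.1 p.2) ⁻¹' (UHP ×ˢ UHP) = univ ×ˢ quadrant := by
    ext p
    simpa using finTwoArrow_ofReIm_mem
  have hS := isOpen_UHP.measurableSet.prod isOpen_UHP.measurableSet
  have hH' := AEMeasurable.comp_quasiMeasurePreserving hH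
    (hpres.restrict_preimage hS).quasiMeasurePreserving
  rw [← hpres.setLIntegral_comp_preimage_emb hemb]
  rw [hpre, Measure.volume_eq_prod, ← Measure.prod_restrict, Measure.restrict_univ] at hH' ⊢
  exact lintegral_prod_symm _ hH'

theorem bergNormSqProd_eq (α₁ α₂ : ℝ) {G : ℂ × ℂ → ℂ} (hG : ContinuousOn G (UHP ×ˢ UHP)) :
    bergNormSqProd α₁ α₂ G
      = ∫⁻ y in quadrant, ENNReal.ofReal (y 0 ^ α₁) * ENNReal.ofReal (y 1 ^ α₂) *
          ∫⁻ x : Fin 2 → ℝ, ‖G (ofReIm x y 0, ofReIm x y 1)‖ₑ ^ 2 := by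
  have hS := isOpen_UHP.measurableSet.prod isOpen_UHP.measurableSet
  have hw (α : ℝ) : Measurable fun z : ℂ => ENNReal.ofReal (z.im ^ α) := by fun_prop
  have hw2 : Measurable fun z : ℂ × ℂ =>
      ENNReal.ofReal (z.1.im ^ α₁) * ENNReal.ofReal (z.2.im ^ α₂) :=
    ((hw α₁).comp measurable_fst).mul ((hw α₂).comp measurable_snd)
  have hG2 : AEMeasurable (fun z => ‖G z‖ₑ ^ 2) (volume.restrict (UHP ×ˢ UHP)) :=
    (hG.aemeasurable hS).enorm.pow_const 2
  calc bergNormSqProd α₁ α₂ G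
      = ∫⁻ z in UHP ×ˢ UHP, ENNReal.ofReal (z.1.im ^ α₁) * ENNReal.ofReal (z.2.im ^ α₂) *
          ‖G z‖ₑ ^ 2 := by
        rw [bergNormSqProd, Vm, Vm, prod_withDensity (hw α₁) (hw α₂), Measure.prod_restrict]
        exact lintegral_withDensity_eq_lintegral_mul₀ hw2.aemeasurable hG2
    _ = _ := by
        refine (setLIntegral_UHP_prod (hw2.aemeasurable.mul hG2)).trans
          (lintegral_congr fun y => ?_)
        rw [← lintegral_const_mul' _ _ (by finiteness)]
        simp [ofReIm]

theorem setLIntegral_quadrant_mul {f g : ℝ → ℝ≥0∞} (hf : Measurable f) (hg : Measurable g) :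
    ∫⁻ y in quadrant, f (y 0) * g (y 1) = (∫⁻ a in Ioi 0, f a) * ∫⁻ b in Ioi 0, g b := by
  rw [← lintegral_prod_mul hf.aemeasurable hg.aemeasurable, Measure.prod_restrict]
  exact (volume_preserving_finTwoArrow ℝ).setLIntegral_comp_preimage_emb
    (MeasurableEquiv.measurableEmbedding _) (fun p => f p.1 * g p.2) (Ioi 0 ×ˢ Ioi 0)

/-- The point `(s, r)` of `𝕜ⁿ⁺¹`; this is `Fin.snoc` without dependent types. -/
def snocPoint {𝕜 : Type*} {n : ℕ} (s : Fin n → 𝕜) (r : 𝕜) : Fin (n + 1) → 𝕜 :=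
  Fin.snoc (α := fun _ => 𝕜) s r

@[simp]
theorem snocPoint_castSucc {𝕜 : Type*} {n : ℕ} (s : Fin n → 𝕜) (r : 𝕜) (i : Fin n) :
    snocPoint s r i.castSucc = s i := Fin.snoc_castSucc (α := fun _ => 𝕜) r s i

@[simp]
theorem snocPoint_last {𝕜 : Type*} {n : ℕ} (s : Fin n → 𝕜) (r : 𝕜) :
    snocPoint s r (Fin.last n) = r := Fin.snoc_last (α := fun _ => 𝕜) r s

variable {n : ℕ}

theorem snocPoint_eq_piFinSuccAbove_symm {X : Type*} [MeasurableSpace X] (s : Fin n → X) (r : X) :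
    snocPoint s r
      = (MeasurableEquiv.piFinSuccAbove (fun _ : Fin (n + 1) => X) (Fin.last n)).symm (r, s) :=
  (Fin.insertNth_last' r s).symm

theorem measurableEmbedding_snocPoint {X : Type*} [MeasurableSpace X] :
    MeasurableEmbedding fun p : (Fin n → X) × X => snocPoint p.1 p.2 := by
  simp only [snocPoint_eq_piFinSuccAbove_symm]
  exact (MeasurableEquiv.measurableEmbedding _).comp MeasurableEquiv.prodComm.measurableEmbedding

theorem measurePreserving_snocPoint {X : Type*} [MeasureSpace X]
    [SigmaFinite (volume : Measure X)] :
    MeasurePreserving fun p : (Fin n → X) × X => snocPoint p.1 p.2 := by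
  simp only [snocPoint_eq_piFinSuccAbove_symm]
  exact (volume_preserving_piFinSuccAbove (fun _ => X) (Fin.last n)).symm.comp
    Measure.measurePreserving_swap

theorem lintegral_snocPoint {h : (Fin (n + 1) → ℝ) → ℝ≥0∞} (hh : AEMeasurable h) :
    ∫⁻ t, h t = ∫⁻ s, ∫⁻ r, h (snocPoint s r) := by
  rw [← measurePreserving_snocPoint.lintegral_comp_emb measurableEmbedding_snocPoint]
  exact lintegral_prod _
    (hh.comp_quasiMeasurePreserving measurePreserving_snocPoint.quasiMeasurePreserving)

theorem integrable_comp_snocPoint {h : (Fin (n + 1) → ℝ) → ℂ} (hh : Integrable h) :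
    Integrable fun p : (Fin n → ℝ) × ℝ => h (snocPoint p.1 p.2) :=
  measurePreserving_snocPoint.integrable_comp_of_integrable hh

theorem integral_snocPoint {h : (Fin (n + 1) → ℝ) → ℂ} (hh : Integrable h) :
    ∫ t, h t = ∫ s, ∫ r, h (snocPoint s r) := by
  rw [← measurePreserving_snocPoint.integral_comp measurableEmbedding_snocPoint]
  exact integral_prod _ (integrable_comp_snocPoint hh)

theorem ae_ae_snocPoint {p : (Fin (n + 1) → ℝ) → Prop} (h : ∀ᵐ t, p t) :
    ∀ᵐ s, ∀ᵐ r, p (snocPoint s r) :=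
  Measure.ae_ae_of_ae_prod (measurePreserving_snocPoint.quasiMeasurePreserving.ae h)

theorem expKernel_snocPoint_zero (z : Fin n → ℂ) (s : Fin n → ℝ) (r : ℝ) :
    expKernel (snocPoint z 0) (snocPoint s r) = expKernel z s := by
  simp [expKernel, dotProduct, Fin.sum_univ_castSucc]

theorem expWeight_snocPoint_zero (y s : Fin n → ℝ) (r : ℝ) :
    expWeight (snocPoint y 0) (snocPoint s r) = expWeight y s := by
  simp [expWeight, dotProduct, Fin.sum_univ_castSucc]

theorem TubeIntegrable.integral_snocPoint {Ω : Set (Fin (n + 1) → ℝ)} {f : (Fin (n + 1) → ℝ) → ℂ}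
    (hf : TubeIntegrable Ω f) :
    TubeIntegrable {y | snocPoint y 0 ∈ Ω} fun s => ∫ r, f (snocPoint s r) := fun y hy => by
  simpa only [expWeight_snocPoint_zero, integral_const_mul] using
    (integrable_comp_snocPoint (hf _ hy)).integral_prod_left

theorem fourierLaplace_snocPoint_zero {Ω : Set (Fin (n + 1) → ℝ)} {f : (Fin (n + 1) → ℝ) → ℂ}
    (hf : TubeIntegrable Ω f) {z : Fin n → ℂ} (hz : snocPoint z 0 ∈ tube Ω) :
    fourierLaplace f (snocPoint z 0) = fourierLaplace (fun s => ∫ r, f (snocPoint s r)) z := by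
  rw [fourierLaplace, integral_snocPoint (hf.integrable_expKernel_mul hz)]
  simp only [expKernel_snocPoint_zero, integral_const_mul, fourierLaplace]

end Coordinates

section LaplaceWeight

open Filter
open scoped Real

/-- The Laplace transform `∫₀^∞ y^α e^{-4πyr} dy` of the Bergman weight `y^α`. -/
def laplaceWeight (α r : ℝ) : ℝ≥0∞ :=
  ∫⁻ y in Ioi (0 : ℝ), ENNReal.ofReal (y ^ α) * ENNReal.ofReal (Real.exp (-(4 * π * (y * r))))

theorem laplaceWeight_of_pos {α : ℝ} (hα : -1 < α) {r : ℝ} (hr : 0 < r) :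
    laplaceWeight α r
      = ENNReal.ofReal ((1 / (4 * π)) ^ (α + 1) * Real.Gamma (α + 1) * (r ^ (α + 1))⁻¹) := by
  have hΓ := Real.integral_rpow_mul_exp_neg_mul_Ioi (a := α + 1) (r := 4 * π * r) (by linarith)
    (by positivity)
  have hval : (1 / (4 * π * r)) ^ (α + 1) * Real.Gamma (α + 1)
      = (1 / (4 * π)) ^ (α + 1) * Real.Gamma (α + 1) * (r ^ (α + 1))⁻¹ := by
    rw [← div_div, div_eq_mul_inv _ r, Real.mul_rpow (by positivity) (by positivity),
      Real.inv_rpow hr.le]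
    ring
  have hint : IntegrableOn (fun y : ℝ => y ^ (α + 1 - 1) * Real.exp (-(4 * π * r * y))) (Ioi 0) :=
    .of_integral_ne_zero (hΓ ▸
      (mul_pos (by positivity) (Real.Gamma_pos_of_pos (by linarith))).ne')
  have hnonneg : 0 ≤ᵐ[volume.restrict (Ioi 0)]
      fun y : ℝ => y ^ (α + 1 - 1) * Real.exp (-(4 * π * r * y)) := by
    filter_upwards [ae_restrict_mem measurableSet_Ioi] with y hy
    exact mul_nonneg (Real.rpow_nonneg (le_of_lt hy) _) (Real.exp_pos _).le
  rw [← hval, ← hΓ, ofReal_integral_eq_lintegral_ofReal hint hnonneg]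
  refine setLIntegral_congr_fun measurableSet_Ioi fun y hy => ?_
  rw [← ENNReal.ofReal_mul (Real.rpow_nonneg (le_of_lt hy) _), add_sub_cancel_right]
  ring_nf

theorem laplaceWeight_of_nonpos (α : ℝ) {r : ℝ} (hr : r ≤ 0) : laplaceWeight α r = ⊤ := by
  have hpow : ∫⁻ y in Ioi (0 : ℝ), ENNReal.ofReal (y ^ α) = ⊤ := by
    by_contra hfin
    refine not_integrableOn_Ioi_rpow α
      ((lintegral_ofReal_ne_top_iff_integrable (by fun_prop) ?_).1 hfin)
    filter_upwards [ae_restrict_mem measurableSet_Ioi] with y hy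
    exact Real.rpow_nonneg (le_of_lt hy) _
  rw [eq_top_iff, ← hpow]
  refine setLIntegral_mono' measurableSet_Ioi fun y hy => le_mul_of_one_le_right' ?_
  refine ENNReal.one_le_ofReal.2 (Real.one_le_exp (neg_nonneg.2 ?_))
  exact mul_nonpos_of_nonneg_of_nonpos (by positivity)
    (mul_nonpos_of_nonneg_of_nonpos (le_of_lt hy) hr)

theorem laplaceWeight_ne_zero {α : ℝ} (hα : -1 < α) (r : ℝ) : laplaceWeight α r ≠ 0 := by
  rcases le_or_gt r 0 with hr | hr
  · simp [laplaceWeight_of_nonpos α hr]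
  · have hΓ : 0 < Real.Gamma (α + 1) := Real.Gamma_pos_of_pos (by linarith)
    rw [laplaceWeight_of_pos hα hr]
    exact (ENNReal.ofReal_pos.2 (by positivity)).ne'

theorem exists_laplaceWeight_mul_eq {α : ℝ} (hα : -1 < α) :
    ∃ c : ℝ, 0 < c ∧ ∀ a b : ℝ, 0 < a → 0 < b →
      laplaceWeight α a * laplaceWeight α b = ENNReal.ofReal (c * ((a * b) ^ (α + 1))⁻¹) := by
  have hΓ : 0 < Real.Gamma (α + 1) := Real.Gamma_pos_of_pos (by linarith)
  refine ⟨((1 / (4 * π)) ^ (α + 1) * Real.Gamma (α + 1)) ^ 2, by positivity, fun a b ha hb => ?_⟩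
  rw [laplaceWeight_of_pos hα ha, laplaceWeight_of_pos hα hb, ← ENNReal.ofReal_mul (by positivity),
    Real.mul_rpow ha.le hb.le, mul_inv]
  ring_nf

@[fun_prop]
theorem measurable_laplaceWeight (α : ℝ) : Measurable (laplaceWeight α) := by
  refine Measurable.lintegral_prod_right' (f := fun p : ℝ × ℝ =>
    ENNReal.ofReal (p.2 ^ α) * ENNReal.ofReal (Real.exp (-(4 * π * (p.2 * p.1))))) ?_
  fun_prop

theorem enorm_expWeight_sq (y s : Fin 2 → ℝ) :
    ‖(expWeight y s : ℂ)‖ₑ ^ 2 = ENNReal.ofReal (Real.exp (-(4 * π * (y 0 * s 0)))) *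
      ENNReal.ofReal (Real.exp (-(4 * π * (y 1 * s 1)))) := by
  rw [← ofReal_norm, norm_expWeight, ← ENNReal.ofReal_pow (expWeight_pos _ _).le,
    ← ENNReal.ofReal_mul (Real.exp_pos _).le, expWeight, ← Real.exp_nat_mul, ← Real.exp_add,
    dotProduct, Fin.sum_univ_two]
  push_cast
  ring_nf

theorem setLIntegral_quadrant_rpow_mul_expWeight (α₁ α₂ : ℝ) (s : Fin 2 → ℝ) :
    ∫⁻ y in quadrant, ENNReal.ofReal (y 0 ^ α₁) * ENNReal.ofReal (y 1 ^ α₂) *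
        ‖(expWeight y s : ℂ)‖ₑ ^ 2
      = laplaceWeight α₁ (s 0) * laplaceWeight α₂ (s 1) := by
  rw [laplaceWeight, laplaceWeight, ← setLIntegral_quadrant_mul (by fun_prop) (by fun_prop)]
  refine lintegral_congr fun y => ?_
  rw [enorm_expWeight_sq]
  ring

-- Plancherel in `x` for each fixed `y` leaves a double integral in `(y, s)`, which Tonelli turns
-- into a weighted `L²` norm.
theorem setLIntegral_quadrant_rpow_mul_eLpNorm (α₁ α₂ : ℝ) {g : (Fin 2 → ℝ) → ℂ}
    (hg : AEStronglyMeasurable g) :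
    ∫⁻ y in quadrant, ENNReal.ofReal (y 0 ^ α₁) * ENNReal.ofReal (y 1 ^ α₂) *
        eLpNorm (fun s => (expWeight y s : ℂ) * g s) 2 ^ 2
      = ∫⁻ s : Fin 2 → ℝ, laplaceWeight α₁ (s 0) * laplaceWeight α₂ (s 1) * ‖g s‖ₑ ^ 2 := by
  have hpt (y : Fin 2 → ℝ) : ENNReal.ofReal (y 0 ^ α₁) * ENNReal.ofReal (y 1 ^ α₂) *
      eLpNorm (fun s => (expWeight y s : ℂ) * g s) 2 ^ 2
      = ∫⁻ s, ENNReal.ofReal (y 0 ^ α₁) * ENNReal.ofReal (y 1 ^ α₂) *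
          ‖(expWeight y s : ℂ)‖ₑ ^ 2 * ‖g s‖ₑ ^ 2 := by
    rw [eLpNorm_two_sq, ← lintegral_const_mul' _ _ (by finiteness)]
    simp only [enorm_mul, mul_pow, mul_assoc]
  have hmeas : AEMeasurable (fun p : (Fin 2 → ℝ) × (Fin 2 → ℝ) =>
      ENNReal.ofReal (p.1 0 ^ α₁) * ENNReal.ofReal (p.1 1 ^ α₂) *
        ‖(expWeight p.1 p.2 : ℂ)‖ₑ ^ 2 * ‖g p.2‖ₑ ^ 2)
      ((volume.restrict quadrant).prod volume) := by
    refine AEMeasurable.mul (Measurable.aemeasurable ?_) (hg.comp_snd.enorm.pow_const 2)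
    simp only [expWeight, dotProduct, Fin.sum_univ_two]
    fun_prop
  simp only [hpt]
  rw [lintegral_lintegral_swap hmeas]
  refine lintegral_congr fun s => ?_
  rw [lintegral_mul_const' _ _ (by finiteness), setLIntegral_quadrant_rpow_mul_expWeight]

end LaplaceWeight

section SupportOfDensity

open Filter Topology
open scoped Real

variable {ι : Type*} [Fintype ι] {f : (ι → ℝ) → ℂ} {y : ι → ℝ} {A : ℝ≥0∞}

-- `x ≤ eˣ` with `x = -2πc y·t` bounds `c ‖(y·t)₋ f‖₂` by `A` for every `c`, so `(y·t)₋ f = 0`.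
theorem ae_ne_zero_imp_dotProduct_nonneg (hf : AEStronglyMeasurable f) (hA : A ≠ ⊤)
    (h : ∀ c : ℝ, 0 < c → eLpNorm (fun t => (expWeight (c • y) t : ℂ) * f t) 2 ≤ A) :
    ∀ᵐ t, f t ≠ 0 → 0 ≤ y ⬝ᵥ t := by
  have hbound (n : ℕ) (hn : 0 < n) :
      n * eLpNorm (fun t => (min (y ⬝ᵥ t) 0 : ℝ) • f t) 2 ≤ A := by
    have hc : (0 : ℝ) < n / (2 * π) := by positivity
    rw [show (n : ℝ≥0∞) = ‖(n : ℝ)‖ₑ by simp, ← eLpNorm_const_smul]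
    refine (eLpNorm_mono fun t => ?_).trans (h _ hc)
    have hexp : -(n * (y ⬝ᵥ t)) ≤ expWeight ((n / (2 * π)) • y) t := by
      rw [expWeight, smul_dotProduct, smul_eq_mul]
      have hcancel : 2 * π * (n / (2 * π) * (y ⬝ᵥ t)) = n * (y ⬝ᵥ t) := by field_simp
      rw [hcancel]
      exact (lt_add_one _).le.trans (Real.add_one_le_exp _)
    have hmin : n * |min (y ⬝ᵥ t) 0| ≤ expWeight ((n / (2 * π)) • y) t := by
      rcases le_total 0 (y ⬝ᵥ t) with hy | hy
      · simpa [min_eq_right hy] using (expWeight_pos _ t).le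
      · rw [min_eq_left hy, abs_of_nonpos hy]
        linarith
    simpa [mul_assoc, abs_of_pos (expWeight_pos _ t)] using
      mul_le_mul_of_nonneg_right hmin (norm_nonneg (f t))
  have hzero : eLpNorm (fun t => (min (y ⬝ᵥ t) 0 : ℝ) • f t) 2 = 0 := by
    by_contra hne
    obtain ⟨n, hn⟩ := ENNReal.exists_nat_mul_gt hne hA
    exact (hbound n (Nat.pos_of_ne_zero fun h0 => by simp [h0] at hn)).not_gt hn
  have hcont : Continuous fun t => min (y ⬝ᵥ t) 0 := by fun_prop
  have hmeas := hcont.aestronglyMeasurable.smul hf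
  filter_upwards [(eLpNorm_eq_zero_iff hmeas two_ne_zero).1 hzero] with t ht hft
  simpa [hft] using ht

theorem ae_ne_zero_imp_forall_dotProduct_nonneg {Ω : Set (ι → ℝ)} (hΩ : IsOpen Ω)
    (hcone : ∀ y ∈ Ω, ∀ c : ℝ, 0 < c → c • y ∈ Ω) (hf : AEStronglyMeasurable f) (hA : A ≠ ⊤)
    (h : ∀ y ∈ Ω, eLpNorm (fun t => (expWeight y t : ℂ) * f t) 2 ≤ A) :
    ∀ᵐ t, f t ≠ 0 → ∀ y ∈ Ω, 0 ≤ y ⬝ᵥ t := by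
  obtain ⟨D, hD, hdense⟩ := TopologicalSpace.exists_countable_dense (ι → ℝ)
  have hae : ∀ᵐ t, ∀ y ∈ Ω ∩ D, f t ≠ 0 → 0 ≤ y ⬝ᵥ t :=
    (ae_ball_iff (hD.mono inter_subset_right)).2 fun y hy =>
      ae_ne_zero_imp_dotProduct_nonneg hf hA fun c hc => h _ (hcone y hy.1 c hc)
  filter_upwards [hae] with t ht hft y hy
  exact closure_minimal (t := {y | 0 ≤ y ⬝ᵥ t}) (fun y hy => ht y hy hft)
    (isClosed_le (by fun_prop) (by fun_prop)) (hdense.open_subset_closure_inter hΩ hy)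

theorem eLpNorm_le_of_forall_expWeight_smul (hf : AEStronglyMeasurable f)
    (h : ∀ c : ℝ, 0 < c → eLpNorm (fun t => (expWeight (c • y) t : ℂ) * f t) 2 ≤ A) :
    eLpNorm f 2 ≤ A := by
  let c (n : ℕ) : ℝ := 1 / ((n : ℝ) + 1)
  have hlim (t : ι → ℝ) :
      Tendsto (fun n => (expWeight (c n • y) t : ℂ) * f t) atTop (𝓝 (f t)) := by
    have hcont : Continuous fun c : ℝ => (expWeight (c • y) t : ℂ) * f t := by
      unfold expWeight; fun_prop
    simpa [expWeight, c, Function.comp_def] using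
      (hcont.tendsto 0).comp (tendsto_one_div_add_atTop_nhds_zero_nat (𝕜 := ℝ))
  refine (Lp.eLpNorm_lim_le_liminf_eLpNorm
    (fun n => (Continuous.aestronglyMeasurable ?_).mul hf) f (.of_forall hlim)).trans ?_
  · exact Complex.continuous_ofReal.comp (continuous_expWeight _)
  · exact liminf_le_of_le (h := fun b hb => by
      obtain ⟨n, hn⟩ := hb.exists
      exact hn.trans (h _ (by positivity)))

end SupportOfDensity

section HardySpace

/-- The closed dual cone of `Σ`, which carries the densities of functions in `H²(T_Σ)`. -/
def dualCone : Set (Fin 3 → ℝ) := {t | 0 ≤ t 0 ∧ 0 ≤ t 1 ∧ t 2 ^ 2 ≤ 4 * (t 0 * t 1)}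

-- Test against the boundary rays `(a², b², ab)` of `Σ` and read off the discriminant.
theorem mem_dualCone_of_forall_dotProduct_nonneg {t : Fin 3 → ℝ}
    (h : ∀ y ∈ Sigma3, 0 ≤ y ⬝ᵥ t) : t ∈ dualCone := by
  have hray (a b : ℝ) : 0 ≤ a ^ 2 * t 0 + b ^ 2 * t 1 + a * b * t 2 := by
    have hpert (δ : ℝ) (hδ : 0 < δ) :
        0 ≤ (a ^ 2 + δ) * t 0 + (b ^ 2 + δ) * t 1 + a * b * t 2 := by
      have hmem : ![a ^ 2 + δ, b ^ 2 + δ, a * b] ∈ Sigma3 := by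
        simp only [Sigma3, mem_ofPred_eq, Matrix.cons_val]
        exact ⟨by nlinarith [mul_pos hδ hδ, mul_nonneg hδ.le (sq_nonneg a),
          mul_nonneg hδ.le (sq_nonneg b)], by positivity⟩
      simpa [dotProduct, Fin.sum_univ_three] using h _ hmem
    have hcont : Continuous fun δ : ℝ => (a ^ 2 + δ) * t 0 + (b ^ 2 + δ) * t 1 + a * b * t 2 := by
      fun_prop
    simpa using ge_of_tendsto (hcont.continuousWithinAt (s := Ioi 0) (x := 0))
      (eventually_mem_nhdsWithin.mono hpert)
  refine ⟨by simpa using hray 1 0, by simpa using hray 0 1, ?_⟩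
  have hdiscrim := discrim_le_zero (a := t 0) (b := t 2) (c := t 1) fun a => by
    linarith [hray a 1]
  rw [discrim] at hdiscrim
  linarith

theorem eLpNorm_ofReIm_le_hardyNormSqSigma (F : (Fin 3 → ℂ) → ℂ) {y : Fin 3 → ℝ}
    (hy : y ∈ Sigma3) :
    eLpNorm (fun x => F (ofReIm x y)) 2 ≤ hardyNormSqSigma F ^ (2⁻¹ : ℝ) := by
  rw [ENNReal.le_rpow_inv_iff two_pos, ENNReal.rpow_two, eLpNorm_two_sq]
  exact le_iSup₂ (f := fun y (_ : y ∈ Sigma3) => ∫⁻ x, ‖F (ofReIm x y)‖ₑ ^ 2) y hy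

-- Letting `y → 0` in `Σ` gives the norm bound, `y → ∞` the support condition.
theorem exists_density_of_hardyNormSqSigma_lt_top {F : (Fin 3 → ℂ) → ℂ}
    (hF : DifferentiableOn ℂ F TSigma) (hfin : hardyNormSqSigma F < ⊤) :
    ∃ f : (Fin 3 → ℝ) → ℂ, TubeIntegrable Sigma3 f ∧ EqOn F (fourierLaplace f) TSigma ∧
      ∫⁻ t, ‖f t‖ₑ ^ 2 ≤ hardyNormSqSigma F ∧ ∀ᵐ t, f t ≠ 0 → t ∈ dualCone := by
  have hA : hardyNormSqSigma F ^ (2⁻¹ : ℝ) ≠ ⊤ := by finiteness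
  have hbase : ![1, 1, 0] ∈ Sigma3 := vec_zero_mem_Sigma3 one_pos one_pos
  obtain ⟨f, hf, hFf, hnorm⟩ := exists_eqOn_fourierLaplace isOpen_Sigma3 convex_Sigma3
    ⟨_, hbase⟩ hF fun y hy y' hy' => ⟨_, hA, fun w hw =>
      eLpNorm_ofReIm_le_hardyNormSqSigma F (convex_Sigma3.segment_subset hy hy' hw)⟩
  have hle (y) (hy : y ∈ Sigma3) : eLpNorm (fun t => (expWeight y t : ℂ) * f t) 2
      ≤ hardyNormSqSigma F ^ (2⁻¹ : ℝ) :=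
    (hnorm y hy).trans_le (eLpNorm_ofReIm_le_hardyNormSqSigma F hy)
  have hmeas := hf.aestronglyMeasurable hbase
  refine ⟨f, hf, hFf, ?_, ?_⟩
  · rw [← eLpNorm_two_sq, ← ENNReal.rpow_two, ← ENNReal.le_rpow_inv_iff two_pos]
    exact eLpNorm_le_of_forall_expWeight_smul hmeas fun c hc => hle _ (smul_mem_Sigma3 hbase hc)
  · filter_upwards [ae_ne_zero_imp_forall_dotProduct_nonneg isOpen_Sigma3
      (fun y hy c hc => smul_mem_Sigma3 hy hc) hmeas hA hle] with t ht hft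
    exact mem_dualCone_of_forall_dotProduct_nonneg (ht hft)

end HardySpace

section RestrictedDensity

open scoped Real

theorem neg_one_lt_two_mul_sub_half (m : ℕ) : (-1 : ℝ) < 2 * m - 1 / 2 := by
  have : (0 : ℝ) ≤ m := m.cast_nonneg
  linarith

theorem rpow_two_mul_sub_half_add_one {q : ℝ} (hq : 0 < q) (m : ℕ) :
    q ^ ((2 * m - 1 / 2 : ℝ) + 1) = q ^ (2 * m) * √q := by
  rw [Real.sqrt_eq_rpow, ← Real.rpow_natCast, ← Real.rpow_add hq]
  push_cast
  ring_nf

theorem snocPoint_mem_dualCone {s : Fin 2 → ℝ} {r : ℝ} :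
    snocPoint s r ∈ dualCone ↔ 0 ≤ s 0 ∧ 0 ≤ s 1 ∧ r ^ 2 ≤ 4 * (s 0 * s 1) := Iff.rfl

theorem boxSymbol_snocPoint (s : Fin 2 → ℝ) (r : ℝ) :
    boxSymbol (snocPoint s r) = 4 * π ^ 2 * (4 * (s 0 * s 1) - r ^ 2) := by
  rw [boxSymbol, mul_assoc 4 (snocPoint s r 0)]
  rfl

variable {s : Fin 2 → ℝ} {φ : ℝ → ℂ}

theorem enorm_boxSymbol_le {r : ℝ} (h : snocPoint s r ∈ dualCone) :
    ‖(boxSymbol (snocPoint s r) : ℂ)‖ₑ ≤ ENNReal.ofReal (16 * π ^ 2 * (s 0 * s 1)) := by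
  have hr := (snocPoint_mem_dualCone.1 h).2.2
  rw [boxSymbol_snocPoint, ← ofReal_norm, Complex.norm_of_nonneg
    (mul_nonneg (by positivity) (sub_nonneg.2 hr))]
  exact ENNReal.ofReal_le_ofReal (by nlinarith [mul_nonneg (sq_nonneg π) (sq_nonneg r)])

theorem enorm_integral_boxSymbol_pow_mul_le (m : ℕ)
    (hsupp : ∀ᵐ r, φ r ≠ 0 → snocPoint s r ∈ dualCone) :
    ‖∫ r, (boxSymbol (snocPoint s r) : ℂ) ^ m * φ r‖ₑ
      ≤ ENNReal.ofReal (16 * π ^ 2 * (s 0 * s 1)) ^ m *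
        ∫⁻ r in Icc (-(2 * √(s 0 * s 1))) (2 * √(s 0 * s 1)), ‖φ r‖ₑ := by
  refine (enorm_integral_le_lintegral_enorm _).trans ?_
  rw [← lintegral_const_mul' _ _ (by finiteness), ← lintegral_indicator measurableSet_Icc]
  refine lintegral_mono_ae ?_
  filter_upwards [hsupp] with r hr
  by_cases hφ : φ r = 0
  · simp [hφ]
  · have hr2 : r ^ 2 ≤ 4 * (s 0 * s 1) := (snocPoint_mem_dualCone.1 (hr hφ)).2.2
    have hmem : |r| ≤ 2 * √(s 0 * s 1) := by
      refine (Real.abs_le_sqrt hr2).trans_eq ?_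
      rw [Real.sqrt_mul (by norm_num), show (4 : ℝ) = 2 ^ 2 by norm_num, Real.sqrt_sq two_pos.le]
    rw [indicator_of_mem (mem_Icc.2 (abs_le.1 hmem)), enorm_mul, enorm_pow]
    gcongr
    exact enorm_boxSymbol_le (hr hφ)

theorem enorm_integral_boxSymbol_pow_mul_sq_le (m : ℕ) (hφ : AEStronglyMeasurable φ)
    (hsupp : ∀ᵐ r, φ r ≠ 0 → snocPoint s r ∈ dualCone) :
    ‖∫ r, (boxSymbol (snocPoint s r) : ℂ) ^ m * φ r‖ₑ ^ 2
      ≤ ENNReal.ofReal (16 * π ^ 2 * (s 0 * s 1)) ^ (2 * m) *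
        ENNReal.ofReal (4 * √(s 0 * s 1)) * ∫⁻ r, ‖φ r‖ₑ ^ 2 := by
  refine (pow_le_pow_left₀ zero_le (enorm_integral_boxSymbol_pow_mul_le m hsupp) 2).trans ?_
  rw [mul_pow, ← pow_mul, mul_comm m, mul_assoc (_ ^ _)]
  refine mul_le_mul_right ((lintegral_enorm_sq_le_measure_univ_mul hφ.restrict).trans ?_) _
  rw [Measure.restrict_apply_univ, Real.volume_Icc, sub_neg_eq_add, ← two_mul, ← mul_assoc]
  norm_num only
  exact mul_le_mul_right (setLIntegral_le_lintegral _ _) _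

theorem integral_boxSymbol_pow_mul_eq_zero (m : ℕ) (hs : s ∉ quadrant)
    (hsupp : ∀ᵐ r, φ r ≠ 0 → snocPoint s r ∈ dualCone) :
    ∫ r, (boxSymbol (snocPoint s r) : ℂ) ^ m * φ r = 0 := by
  refine integral_eq_zero_of_ae ?_
  filter_upwards [hsupp, Measure.ae_ne volume 0] with r hr hr0
  by_cases hφ : φ r = 0
  · simp [hφ]
  · obtain ⟨h0, h1, h2⟩ := snocPoint_mem_dualCone.1 (hr hφ)
    have hprod : 0 < s 0 * s 1 := by linarith [pow_pos (abs_pos.2 hr0) 2, sq_abs r]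
    exact absurd ⟨pos_of_mul_pos_left hprod h1, pos_of_mul_pos_right hprod h0⟩ hs

-- The weights contribute `q^{-2m-1/2}` with `q = s₀s₁`, the symbol `q^{2m}`, and Cauchy–Schwarz on
-- `|r| ≤ 2√q` the missing `√q`.
theorem exists_laplaceWeight_mul_enorm_integral_sq_le (m : ℕ) :
    ∃ C : ℝ, 0 < C ∧ ∀ (s : Fin 2 → ℝ) (φ : ℝ → ℂ), AEStronglyMeasurable φ →
      (∀ᵐ r, φ r ≠ 0 → snocPoint s r ∈ dualCone) →
      laplaceWeight (2 * m - 1 / 2) (s 0) * laplaceWeight (2 * m - 1 / 2) (s 1) *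
        ‖∫ r, (boxSymbol (snocPoint s r) : ℂ) ^ m * φ r‖ₑ ^ 2
        ≤ ENNReal.ofReal C * ∫⁻ r, ‖φ r‖ₑ ^ 2 := by
  obtain ⟨c, hc, hweight⟩ := exists_laplaceWeight_mul_eq (neg_one_lt_two_mul_sub_half m)
  refine ⟨c * (16 * π ^ 2) ^ (2 * m) * 4, by positivity, fun s φ hφ hsupp => ?_⟩
  by_cases hs : s ∈ quadrant
  · have hq : 0 < s 0 * s 1 := mul_pos hs.1 hs.2
    rw [hweight _ _ hs.1 hs.2, rpow_two_mul_sub_half_add_one hq]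
    refine (mul_le_mul_right (enorm_integral_boxSymbol_pow_mul_sq_le m hφ hsupp) _).trans_eq ?_
    rw [← ENNReal.ofReal_pow (by positivity), ← ENNReal.ofReal_mul (by positivity), ← mul_assoc,
      ← ENNReal.ofReal_mul (by positivity), mul_pow (16 * π ^ 2)]
    congr 2
    field_simp
  · simp [integral_boxSymbol_pow_mul_eq_zero m hs hsupp]

end RestrictedDensity

section BoxHardyToBergman

variable {g : (Fin 2 → ℝ) → ℂ} {G : ℂ × ℂ → ℂ}

theorem snocPoint_zero_mem_Sigma3 {y : Fin 2 → ℝ} (hy : y ∈ quadrant) :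
    snocPoint y 0 ∈ Sigma3 := by
  change 0 < y 0 * y 1 - 0 ^ 2 ∧ 0 < y 0
  simpa using ⟨mul_pos hy.1 hy.2, hy.1⟩

theorem snocPoint_zero_mem_TSigma {p : ℂ × ℂ} (hp : p ∈ UHP ×ˢ UHP) :
    snocPoint ![p.1, p.2] 0 ∈ TSigma := by
  change 0 < p.1.im * p.2.im - 0 ^ 2 ∧ 0 < p.1.im
  simpa using ⟨mul_pos hp.1 hp.2, hp.1⟩

theorem restrict_iterate_BoxS_eqOn {f : (Fin 3 → ℝ) → ℂ} {F : (Fin 3 → ℂ) → ℂ}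
    (hf : TubeIntegrable Sigma3 f) (hF : EqOn F (fourierLaplace f) TSigma) (m : ℕ) :
    TubeIntegrable quadrant
        (fun s => ∫ r, (boxSymbol (snocPoint s r) : ℂ) ^ m * f (snocPoint s r)) ∧
      EqOn (fun p : ℂ × ℂ => BoxS^[m] F ![p.1, p.2, 0])
        (fun p => fourierLaplace
          (fun s => ∫ r, (boxSymbol (snocPoint s r) : ℂ) ^ m * f (snocPoint s r)) ![p.1, p.2])
        (UHP ×ˢ UHP) := by
  have hfm := hf.boxSymbol_pow_mul m
  refine ⟨fun y hy => hfm.integral_snocPoint y (snocPoint_zero_mem_Sigma3 hy), fun p hp => ?_⟩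
  have hz : snocPoint ![p.1, p.2] 0 ∈ TSigma := snocPoint_zero_mem_TSigma hp
  have hp0 : ![p.1, p.2, 0] = snocPoint ![p.1, p.2] 0 := by
    ext i
    fin_cases i <;> rfl
  simp only [hp0]
  rw [← fourierLaplace_snocPoint_zero hfm hz]
  exact iterate_BoxS_eqOn hf hF m hz

theorem differentiableOn_of_eqOn_fourierLaplace (hg : TubeIntegrable quadrant g)
    (hG : EqOn G (fun p => fourierLaplace g ![p.1, p.2]) (UHP ×ˢ UHP)) :
    DifferentiableOn ℂ G (UHP ×ˢ UHP) := by
  refine DifferentiableOn.congr ?_ hG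
  have hpair : Differentiable ℂ fun p : ℂ × ℂ => ![p.1, p.2] := differentiable_pi.2 fun i => by
    fin_cases i
    · exact differentiable_fst
    · exact differentiable_snd
  exact (hg.differentiableOn isOpen_quadrant).comp hpair.differentiableOn fun p hp => hp

theorem bergNormSqProd_le_of_eqOn_fourierLaplace (α₁ α₂ : ℝ) (hg : TubeIntegrable quadrant g)
    (hG : EqOn G (fun p => fourierLaplace g ![p.1, p.2]) (UHP ×ˢ UHP)) :
    bergNormSqProd α₁ α₂ G
      ≤ ∫⁻ s : Fin 2 → ℝ, laplaceWeight α₁ (s 0) * laplaceWeight α₂ (s 1) * ‖g s‖ₑ ^ 2 := by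
  have hmeas := hg.aestronglyMeasurable (y := ![1, 1]) ⟨one_pos, one_pos⟩
  rw [bergNormSqProd_eq α₁ α₂ (differentiableOn_of_eqOn_fourierLaplace hg hG).continuousOn,
    ← setLIntegral_quadrant_rpow_mul_eLpNorm α₁ α₂ hmeas]
  refine setLIntegral_mono' isOpen_quadrant.measurableSet fun y hy => mul_le_mul_right ?_ _
  have hslice (x : Fin 2 → ℝ) :
      G (ofReIm x y 0, ofReIm x y 1) = fourierLaplace g (ofReIm x y) := by
    rw [hG (finTwoArrow_ofReIm_mem.2 hy)]
    exact congrArg (fourierLaplace g) (FinVec.etaExpand_eq (ofReIm x y))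
  simp only [hslice]
  rw [← eLpNorm_two_sq]
  exact pow_le_pow_left₀ zero_le (eLpNorm_fourierLaplace_ofReIm_le (hg y hy)) 2

theorem exists_bergNormSqProd_iterate_BoxS_le (m : ℕ) :
    ∃ C : ℝ, 0 < C ∧ ∀ F : (Fin 3 → ℂ) → ℂ,
      DifferentiableOn ℂ F TSigma → hardyNormSqSigma F < ⊤ →
      DifferentiableOn ℂ (fun p : ℂ × ℂ => BoxS^[m] F ![p.1, p.2, 0]) (UHP ×ˢ UHP) ∧
      bergNormSqProd (2 * m - 1 / 2) (2 * m - 1 / 2)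
          (fun p : ℂ × ℂ => BoxS^[m] F ![p.1, p.2, 0])
        ≤ ENNReal.ofReal C * hardyNormSqSigma F := by
  obtain ⟨C, hC, hslice⟩ := exists_laplaceWeight_mul_enorm_integral_sq_le m
  refine ⟨C, hC, fun F hF hfin => ?_⟩
  obtain ⟨f, hf, hFf, hnorm, hsupp⟩ := exists_density_of_hardyNormSqSigma_lt_top hF hfin
  have hmeas := hf.aestronglyMeasurable (vec_zero_mem_Sigma3 one_pos one_pos)
  obtain ⟨hg, hBox⟩ := restrict_iterate_BoxS_eqOn hf hFf m
  refine ⟨differentiableOn_of_eqOn_fourierLaplace hg hBox,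
    (bergNormSqProd_le_of_eqOn_fourierLaplace _ _ hg hBox).trans ?_⟩
  calc _ ≤ ∫⁻ s : Fin 2 → ℝ, ENNReal.ofReal C * ∫⁻ r, ‖f (snocPoint s r)‖ₑ ^ 2 := by
        have hmeas_slice := (hmeas.comp_measurePreserving measurePreserving_snocPoint).prodMk_left
        refine lintegral_mono_ae ?_
        filter_upwards [hmeas_slice, ae_ae_snocPoint hsupp] with s hs hs_supp
        exact hslice s _ hs hs_supp
    _ = ENNReal.ofReal C * ∫⁻ t, ‖f t‖ₑ ^ 2 := by
        rw [lintegral_const_mul' _ _ ENNReal.ofReal_ne_top,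
          lintegral_snocPoint (hmeas.enorm.pow_const 2)]
    _ ≤ _ := mul_le_mul_right hnorm _

end BoxHardyToBergman

section MeanValue

open Metric

theorem enorm_sq_le_lintegral_circleMap {g : ℂ → ℂ} {w : ℂ} {r ρ : ℝ}
    (hg : DifferentiableOn ℂ g (ball w ρ)) (hr : 0 < r) (hrρ : r < ρ) :
    ENNReal.ofReal (2 * Real.pi) * ‖g w‖ₑ ^ 2
      ≤ ∫⁻ θ in Ioo (-Real.pi) Real.pi, ‖g (circleMap w r θ)‖ₑ ^ 2 := by
  have hmean : Real.circleAverage (fun z => g z ^ 2) w r = g w ^ 2 :=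
    ((hg.pow 2).diffContOnCl_ball (closedBall_subset_ball (by rwa [abs_of_pos hr]))).circleAverage
  have hper : Function.Periodic (fun θ => g (circleMap w r θ) ^ 2) (2 * Real.pi) :=
    fun θ => by simp only [periodic_circleMap w r θ]
  have hshift := hper.intervalIntegral_add_eq 0 (-Real.pi)
  rw [zero_add, neg_add_eq_sub, two_mul, add_sub_cancel_right] at hshift
  rw [Real.circleAverage_def, inv_smul_eq_iff₀ (by positivity), two_mul, hshift,
    intervalIntegral.integral_of_le (by linarith [Real.pi_pos]),
    integral_Ioc_eq_integral_Ioo, ← two_mul] at hmean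
  calc ENNReal.ofReal (2 * Real.pi) * ‖g w‖ₑ ^ 2
      = ‖∫ θ in Ioo (-Real.pi) Real.pi, g (circleMap w r θ) ^ 2‖ₑ := by
        rw [hmean, enorm_smul, enorm_pow, Real.enorm_of_nonneg (by positivity)]
    _ ≤ _ := (enorm_integral_le_lintegral_enorm _).trans_eq (by simp only [enorm_pow])

theorem setLIntegral_ball_eq_lintegral_circleMap {N : ℂ → ℝ≥0∞} {w : ℂ} {ρ : ℝ}
    (hN : ContinuousOn N (ball w ρ)) :
    ∫⁻ z in ball w ρ, N z
      = ∫⁻ r in Ioo 0 ρ, ENNReal.ofReal r *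
          ∫⁻ θ in Ioo (-Real.pi) Real.pi, N (circleMap w r θ) := by
  have hmem (r θ : ℝ) (hr : 0 < r) : circleMap w r θ ∈ ball w ρ ↔ r < ρ := by
    simp [circleMap, abs_of_pos hr]
  have hcirc : Continuous fun p : ℝ × ℝ => circleMap w p.1 p.2 := by
    unfold circleMap; fun_prop
  have hmaps : MapsTo (fun p : ℝ × ℝ => circleMap w p.1 p.2)
      (Ioo 0 ρ ×ˢ Ioo (-Real.pi) Real.pi) (ball w ρ) := fun p hp =>
    (hmem _ _ hp.1.1).2 hp.1.2
  calc ∫⁻ z in ball w ρ, N z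
      = ∫⁻ z, (ball w ρ).indicator N (w + z) := by
        rw [lintegral_add_left_eq_self, lintegral_indicator measurableSet_ball]
    _ = ∫⁻ p in Ioi 0 ×ˢ Ioo (-Real.pi) Real.pi, ENNReal.ofReal p.1 *
          (ball w ρ).indicator N (circleMap w p.1 p.2) := by
        rw [← Complex.lintegral_comp_polarCoord_symm, polarCoord_target]
        simp only [Complex.polarCoord_symm_apply, circleMap, Complex.exp_mul_I,
          Complex.ofReal_cos, Complex.ofReal_sin, smul_eq_mul]
    _ = ∫⁻ p in Ioo 0 ρ ×ˢ Ioo (-Real.pi) Real.pi, ENNReal.ofReal p.1 *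
          N (circleMap w p.1 p.2) := by
        have hIoo : Ioo 0 ρ ×ˢ Ioo (-Real.pi) Real.pi
            = Iio ρ ×ˢ univ ∩ Ioi 0 ×ˢ Ioo (-Real.pi) Real.pi := by
          rw [prod_inter_prod, univ_inter, inter_comm, Ioi_inter_Iio]
        rw [hIoo, ← setLIntegral_indicator (measurableSet_Iio.prod .univ)]
        refine setLIntegral_congr_fun (measurableSet_Ioi.prod measurableSet_Ioo) fun p hp => ?_
        simp only [indicator, hmem _ _ hp.1, mem_prod, mem_Iio, mem_univ, and_true, mul_ite,
          mul_zero]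
    _ = _ := by
        rw [Measure.volume_eq_prod, setLIntegral_prod _ ?_]
        · simp only [lintegral_const_mul' _ _ ENNReal.ofReal_ne_top]
        · refine AEMeasurable.mul (by fun_prop) (ContinuousOn.aemeasurable ?_ ?_)
          · exact hN.comp hcirc.continuousOn hmaps
          · exact measurableSet_Ioo.prod measurableSet_Ioo

theorem volume_ball_mul_enorm_sq_le {g : ℂ → ℂ} {w : ℂ} {ρ : ℝ}
    (hg : DifferentiableOn ℂ g (ball w ρ)) :
    volume (ball w ρ) * ‖g w‖ₑ ^ 2 ≤ ∫⁻ z in ball w ρ, ‖g z‖ₑ ^ 2 := by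
  have hcont : ContinuousOn (fun z => ‖g z‖ₑ ^ 2) (ball w ρ) := by
    have := hg.continuousOn
    fun_prop
  rw [setLIntegral_ball_eq_lintegral_circleMap hcont, ← setLIntegral_one,
    setLIntegral_ball_eq_lintegral_circleMap continuousOn_const,
    ← lintegral_mul_const' _ _ (by finiteness)]
  refine setLIntegral_mono' measurableSet_Ioo fun r hr => ?_
  rw [mul_assoc]
  gcongr
  calc _ = ENNReal.ofReal (2 * Real.pi) * ‖g w‖ₑ ^ 2 := by simp [two_mul]
    _ ≤ _ := enorm_sq_le_lintegral_circleMap hg hr.1 hr.2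

theorem snocPoint_mem_ball {X : Type*} [PseudoMetricSpace X] {n : ℕ} {s c : Fin n → X}
    {r a : X} {ρ : ℝ} (hρ : 0 < ρ) :
    snocPoint s r ∈ ball (snocPoint c a) ρ ↔ s ∈ ball c ρ ∧ r ∈ ball a ρ := by
  simp [mem_ball, dist_pi_lt_iff hρ, Fin.forall_fin_succ']

theorem differentiable_snocPoint {n : ℕ} :
    Differentiable ℂ fun p : (Fin n → ℂ) × ℂ => snocPoint p.1 p.2 :=
  differentiable_pi'' fun i => by
    refine i.lastCases ?_ fun i => ?_
    · simpa only [snocPoint_last] using differentiable_snd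
    · simp only [snocPoint_castSucc]
      fun_prop

theorem volume_ball_mul_enorm_sq_le_pi {n : ℕ} {g : (Fin n → ℂ) → ℂ} {w : Fin n → ℂ} {ρ : ℝ}
    (hρ : 0 < ρ) (hg : DifferentiableOn ℂ g (ball w ρ)) :
    volume (ball w ρ) * ‖g w‖ₑ ^ 2 ≤ ∫⁻ z in ball w ρ, ‖g z‖ₑ ^ 2 := by
  induction n with
  | zero => 
    rw [mul_comm, ← setLIntegral_const]
    exact (lintegral_congr fun z => by rw [Subsingleton.elim z w]).le
  | succ n ih =>
    obtain ⟨c, a, rfl⟩ : ∃ c a, snocPoint c a = w :=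
      ⟨_, _, Fin.snoc_init_self (α := fun _ => ℂ) w⟩
    have hpre : (fun p : (Fin n → ℂ) × ℂ => snocPoint p.1 p.2) ⁻¹' ball (snocPoint c a) ρ
        = ball c ρ ×ˢ ball a ρ := ext fun p => snocPoint_mem_ball hρ
    have hg' : DifferentiableOn ℂ (fun p : (Fin n → ℂ) × ℂ => g (snocPoint p.1 p.2))
        (ball c ρ ×ˢ ball a ρ) := hg.comp differentiable_snocPoint.differentiableOn hpre.ge
    have hmeas : AEMeasurable (fun p : (Fin n → ℂ) × ℂ => ‖g (snocPoint p.1 p.2)‖ₑ ^ 2)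
        ((volume.prod volume).restrict (ball c ρ ×ˢ ball a ρ)) :=
      (hg'.continuousOn.aemeasurable (measurableSet_ball.prod measurableSet_ball)).enorm.pow_const 2
    rw [← measurePreserving_snocPoint.measure_preimage_emb measurableEmbedding_snocPoint,
      ← measurePreserving_snocPoint.setLIntegral_comp_preimage_emb measurableEmbedding_snocPoint,
      hpre, Measure.volume_eq_prod, Measure.prod_prod, setLIntegral_prod _ hmeas]
    calc volume (ball c ρ) * volume (ball a ρ) * ‖g (snocPoint c a)‖ₑ ^ 2
        = volume (ball a ρ) * (volume (ball c ρ) * ‖g (snocPoint c a)‖ₑ ^ 2) := by ring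
      _ ≤ volume (ball a ρ) * ∫⁻ s in ball c ρ, ‖g (snocPoint s a)‖ₑ ^ 2 := by
          gcongr
          exact ih (hg'.comp (differentiable_id.prodMk (differentiable_const a)).differentiableOn
            fun s hs => ⟨hs, mem_ball_self hρ⟩)
      _ = ∫⁻ s in ball c ρ, volume (ball a ρ) * ‖g (snocPoint s a)‖ₑ ^ 2 :=
          (lintegral_const_mul' _ _ measure_ball_lt_top.ne).symm
      _ ≤ _ := setLIntegral_mono' measurableSet_ball fun s hs =>
          volume_ball_mul_enorm_sq_le
            (hg'.comp ((differentiable_const s).prodMk differentiable_id).differentiableOn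
              fun r hr => ⟨hs, hr⟩)

end MeanValue

section SliceBounds

open Metric

variable {n : ℕ} {Ω : Set (Fin n → ℝ)} {F : (Fin n → ℂ) → ℂ}

theorem preimage_ofReIm_ball_subset (x y : Fin n → ℝ) {ρ : ℝ} (hρ : 0 < ρ) :
    (fun p : (Fin n → ℝ) × (Fin n → ℝ) => ofReIm p.1 p.2) ⁻¹' ball (ofReIm x y) ρ
      ⊆ ball x ρ ×ˢ ball y ρ := fun p hp => by
  simp only [mem_preimage, mem_prod, mem_ball, dist_pi_lt_iff hρ] at hp ⊢
  refine ⟨fun i => (?_ : _ ≤ _).trans_lt (hp i), fun i => (?_ : _ ≤ _).trans_lt (hp i)⟩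
  · simpa [ofReIm, Complex.dist_eq, Real.dist_eq] using
      Complex.abs_re_le_norm (ofReIm p.1 p.2 i - ofReIm x y i)
  · simpa [ofReIm, Complex.dist_eq, Real.dist_eq] using
      Complex.abs_im_le_norm (ofReIm p.1 p.2 i - ofReIm x y i)

theorem setLIntegral_ball_ofReIm_le (x y : Fin n → ℝ) {ρ : ℝ} (hρ : 0 < ρ)
    (N : (Fin n → ℂ) → ℝ≥0∞) :
    ∫⁻ z in ball (ofReIm x y) ρ, N z ≤ ∫⁻ u in ball x ρ, ∫⁻ v in ball y ρ, N (ofReIm u v) := by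
  rw [← measurePreserving_ofReIm.setLIntegral_comp_preimage_emb measurableEmbedding_ofReIm]
  refine (lintegral_mono_set (preimage_ofReIm_ball_subset x y hρ)).trans ?_
  rw [Measure.volume_eq_prod, ← Measure.prod_restrict]
  exact lintegral_prod_le _

theorem lintegral_setLIntegral_ball {H : (Fin n → ℝ) → ℝ≥0∞} (hH : AEMeasurable H) (ρ : ℝ) :
    ∫⁻ x, ∫⁻ u in ball x ρ, H u = volume (ball (0 : Fin n → ℝ) ρ) * ∫⁻ u, H u := by
  have hshift (x : Fin n → ℝ) : ∫⁻ u in ball x ρ, H u = ∫⁻ u in ball 0 ρ, H (x + u) := by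
    rw [← (measurePreserving_add_left volume x).setLIntegral_comp_preimage_emb
      (measurableEmbedding_addLeft x), preimage_add_ball, sub_self]
  have hmeas : AEMeasurable (fun p : (Fin n → ℝ) × (Fin n → ℝ) => H (p.1 + p.2))
      (volume.prod (volume.restrict (ball 0 ρ))) :=
    hH.comp_quasiMeasurePreserving (Measure.quasiMeasurePreserving_fst.comp
      (measurePreserving_add_prod _ _).quasiMeasurePreserving)
  simp only [hshift]
  rw [lintegral_lintegral_swap hmeas]
  simp only [lintegral_add_right_eq_self]
  rw [setLIntegral_const, mul_comm]

theorem volume_ball_mul_lintegral_ofReIm_le (hF : DifferentiableOn ℂ F (tube Ω))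
    {y : Fin n → ℝ} {ρ : ℝ} (hρ : 0 < ρ) (hball : ball y ρ ⊆ Ω) :
    volume (ball (0 : Fin n → ℂ) ρ) * ∫⁻ x, ‖F (ofReIm x y)‖ₑ ^ 2
      ≤ volume (ball (0 : Fin n → ℝ) ρ) * ∫⁻ v in ball y ρ, ∫⁻ x, ‖F (ofReIm x v)‖ₑ ^ 2 := by
  have hmeas : AEMeasurable (fun p : (Fin n → ℝ) × (Fin n → ℝ) => ‖F (ofReIm p.1 p.2)‖ₑ ^ 2)
      (volume.prod (volume.restrict (ball y ρ))) := by
    rw [← Measure.restrict_univ (μ := volume), Measure.prod_restrict]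
    exact ((hF.continuousOn.comp continuous_ofReIm.continuousOn fun p hp =>
      ofReIm_mem_tube.2 (hball hp.2)).aemeasurable
        (MeasurableSet.univ.prod measurableSet_ball)).enorm.pow_const 2
  have hball_tube (x : Fin n → ℝ) : ball (ofReIm x y) ρ ⊆ tube Ω := fun z hz => by
    rw [← ofReIm_re_im z] at hz ⊢
    exact ofReIm_mem_tube.2 (hball (preimage_ofReIm_ball_subset x y hρ (a := (_, _)) hz).2)
  calc volume (ball (0 : Fin n → ℂ) ρ) * ∫⁻ x, ‖F (ofReIm x y)‖ₑ ^ 2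
      = ∫⁻ x, volume (ball (ofReIm x y) ρ) * ‖F (ofReIm x y)‖ₑ ^ 2 := by
        simp only [Measure.addHaar_ball_center]
        rw [lintegral_const_mul' _ _ measure_ball_lt_top.ne]
    _ ≤ ∫⁻ x, ∫⁻ u in ball x ρ, ∫⁻ v in ball y ρ, ‖F (ofReIm u v)‖ₑ ^ 2 :=
        lintegral_mono fun x =>
          (volume_ball_mul_enorm_sq_le_pi hρ (hF.mono (hball_tube x))).trans
            (setLIntegral_ball_ofReIm_le x y hρ fun z => ‖F z‖ₑ ^ 2)
    _ = _ := by
        rw [lintegral_setLIntegral_ball hmeas.lintegral_prod_right', lintegral_lintegral_swap hmeas]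

theorem setLIntegral_ne_top_of_isCompact {S : (Fin n → ℝ) → ℝ≥0∞} {K : Set (Fin n → ℝ)}
    (hK : IsCompact K) {ω : (Fin n → ℝ) → ℝ≥0∞} (hω : ContinuousOn ω K) (hpos : ∀ y ∈ K, ω y ≠ 0)
    (hfin : ∫⁻ y in K, ω y * S y ≠ ⊤) : ∫⁻ y in K, S y ≠ ⊤ := by
  rcases K.eq_empty_or_nonempty with rfl | hne
  · simp
  obtain ⟨y₀, hy₀, hmin⟩ := hK.exists_isMinOn hne hω
  have hle : ω y₀ * ∫⁻ y in K, S y ≤ ∫⁻ y in K, ω y * S y := by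
    refine (lintegral_const_mul_le _ _).trans (setLIntegral_mono' hK.measurableSet fun y hy => ?_)
    gcongr
    exact hmin hy
  exact (ENNReal.lt_top_of_mul_ne_top_right (ne_top_of_le_ne_top hfin hle) (hpos _ hy₀)).ne

theorem exists_lintegral_ofReIm_le_of_isCompact (hΩ : IsOpen Ω)
    (hF : DifferentiableOn ℂ F (tube Ω)) {ω : (Fin n → ℝ) → ℝ≥0∞} (hω : ContinuousOn ω Ω)
    (hpos : ∀ y ∈ Ω, ω y ≠ 0)
    (hfin : ∫⁻ y in Ω, ω y * ∫⁻ x, ‖F (ofReIm x y)‖ₑ ^ 2 ≠ ⊤)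
    {K : Set (Fin n → ℝ)} (hK : IsCompact K) (hKΩ : K ⊆ Ω) :
    ∃ C ≠ ⊤, ∀ y ∈ K, ∫⁻ x, ‖F (ofReIm x y)‖ₑ ^ 2 ≤ C := by
  obtain ⟨ρ, hρ, hthick⟩ := hK.exists_cthickening_subset_open hΩ hKΩ
  have hI : ∫⁻ v in cthickening ρ K, ∫⁻ x, ‖F (ofReIm x v)‖ₑ ^ 2 ≠ ⊤ :=
    setLIntegral_ne_top_of_isCompact hK.cthickening (hω.mono hthick)
      (fun y hy => hpos y (hthick hy)) (ne_top_of_le_ne_top hfin (lintegral_mono_set hthick))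
  have hV : volume (ball (0 : Fin n → ℂ) ρ) ≠ 0 := (measure_ball_pos volume 0 hρ).ne'
  have hW : volume (ball (0 : Fin n → ℝ) ρ) ≠ ⊤ := measure_ball_lt_top.ne
  refine ⟨_, ENNReal.div_ne_top (ENNReal.mul_ne_top hW hI) hV, fun y hy => ?_⟩
  have hball : ball y ρ ⊆ cthickening ρ K :=
    (ball_subset_thickening hy ρ).trans (thickening_subset_cthickening ρ K)
  rw [ENNReal.le_div_iff_mul_le (.inl hV) (.inl measure_ball_lt_top.ne), mul_comm]
  exact (volume_ball_mul_lintegral_ofReIm_le hF hρ (hball.trans hthick)).trans (by gcongr)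

end SliceBounds

section BergmanDensity

theorem convex_quadrant : Convex ℝ quadrant :=
  (convex_halfSpace_gt (LinearMap.proj (R := ℝ) (φ := fun _ : Fin 2 => ℝ) 0).isLinear 0).inter
    (convex_halfSpace_gt (LinearMap.proj (R := ℝ) (φ := fun _ : Fin 2 => ℝ) 1).isLinear 0)

theorem exists_density_of_bergNormSqProd_lt_top (α₁ α₂ : ℝ) {G : ℂ × ℂ → ℂ}
    (hG : DifferentiableOn ℂ G (UHP ×ˢ UHP)) (hfin : bergNormSqProd α₁ α₂ G < ⊤) :
    ∃ g : (Fin 2 → ℝ) → ℂ, TubeIntegrable quadrant g ∧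
      EqOn G (fun p => fourierLaplace g ![p.1, p.2]) (UHP ×ˢ UHP) ∧
      ∫⁻ s, laplaceWeight α₁ (s 0) * laplaceWeight α₂ (s 1) * ‖g s‖ₑ ^ 2
        = bergNormSqProd α₁ α₂ G := by
  have hGt : DifferentiableOn ℂ (fun z : Fin 2 → ℂ => G (z 0, z 1)) (tube quadrant) :=
    hG.comp (by fun_prop) fun z hz => hz
  rw [bergNormSqProd_eq α₁ α₂ hG.continuousOn] at hfin ⊢
  have hω : ContinuousOn (fun y : Fin 2 → ℝ =>
      ENNReal.ofReal (y 0 ^ α₁) * ENNReal.ofReal (y 1 ^ α₂)) quadrant :=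
    ContinuousOn.ennreal_mul
      (ENNReal.continuous_ofReal.comp_continuousOn (ContinuousOn.rpow_const
        (continuous_apply 0).continuousOn fun y hy => .inl hy.1.ne'))
      (ENNReal.continuous_ofReal.comp_continuousOn (ContinuousOn.rpow_const
        (continuous_apply 1).continuousOn fun y hy => .inl hy.2.ne'))
      (fun _ _ => .inr ENNReal.ofReal_ne_top) fun _ _ => .inr ENNReal.ofReal_ne_top
  have hpos (y) (hy : y ∈ quadrant) :
      ENNReal.ofReal (y 0 ^ α₁) * ENNReal.ofReal (y 1 ^ α₂) ≠ 0 :=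
    mul_ne_zero (ENNReal.ofReal_pos.2 (Real.rpow_pos_of_pos hy.1 _)).ne'
      (ENNReal.ofReal_pos.2 (Real.rpow_pos_of_pos hy.2 _)).ne'
  obtain ⟨g, hg, hGg, hnorm⟩ := exists_eqOn_fourierLaplace isOpen_quadrant convex_quadrant
    ⟨![1, 1], one_pos, one_pos⟩ hGt fun y hy y' hy' => by
      obtain ⟨C, hC, hbound⟩ := exists_lintegral_ofReIm_le_of_isCompact isOpen_quadrant hGt hω
        hpos hfin.ne
        (segment_eq_image ℝ y y' ▸ isCompact_Icc.image (by fun_prop))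
        (convex_quadrant.segment_subset hy hy')
      refine ⟨C ^ (2⁻¹ : ℝ), by finiteness, fun w hw => ?_⟩
      rw [ENNReal.le_rpow_inv_iff two_pos, ENNReal.rpow_two, eLpNorm_two_sq]
      exact hbound w hw
  refine ⟨g, hg, fun p hp => hGg (x := ![p.1, p.2]) hp, ?_⟩
  rw [← setLIntegral_quadrant_rpow_mul_eLpNorm α₁ α₂
    (hg.aestronglyMeasurable (y := ![1, 1]) ⟨one_pos, one_pos⟩)]
  refine setLIntegral_congr_fun isOpen_quadrant.measurableSet fun y hy => ?_
  simp only [hnorm y hy, eLpNorm_two_sq]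

-- Off the quadrant the product of the weights is infinite.
theorem ae_eq_zero_of_notMem_quadrant {α₁ α₂ : ℝ} (hα₁ : -1 < α₁) (hα₂ : -1 < α₂)
    {g : (Fin 2 → ℝ) → ℂ} (hg : AEStronglyMeasurable g)
    (hfin : ∫⁻ s, laplaceWeight α₁ (s 0) * laplaceWeight α₂ (s 1) * ‖g s‖ₑ ^ 2 ≠ ⊤) :
    ∀ᵐ s, s ∉ quadrant → g s = 0 := by
  have hmeas : AEMeasurable fun s : Fin 2 → ℝ =>
      laplaceWeight α₁ (s 0) * laplaceWeight α₂ (s 1) * ‖g s‖ₑ ^ 2 :=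
    AEMeasurable.mul (by fun_prop) (hg.enorm.pow_const 2)
  filter_upwards [ae_lt_top' hmeas hfin] with s hs hsQ
  by_contra hgs
  refine hs.ne (ENNReal.mul_eq_top.2 (.inr ⟨?_, by simpa using hgs⟩))
  rcases not_and_or.1 hsQ with h | h
  · rw [laplaceWeight_of_nonpos α₁ (not_lt.1 h), ENNReal.top_mul (laplaceWeight_ne_zero hα₂ _)]
  · rw [laplaceWeight_of_nonpos α₂ (not_lt.1 h), ENNReal.mul_top (laplaceWeight_ne_zero hα₁ _)]

end BergmanDensity

section HardyDensity

theorem dotProduct_nonneg_of_mem_dualCone {y t : Fin 3 → ℝ} (hy : y ∈ Sigma3)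
    (ht : t ∈ dualCone) : 0 ≤ y ⬝ᵥ t := by
  have hy1 := pos_one_of_mem_Sigma3 hy
  obtain ⟨hdet, hy0⟩ := hy
  obtain ⟨ht0, ht1, ht2⟩ := ht
  have hcross : (y 2 * t 2) ^ 2 ≤ (y 0 * t 0 + y 1 * t 1) ^ 2 :=
    calc (y 2 * t 2) ^ 2 = y 2 ^ 2 * t 2 ^ 2 := mul_pow _ _ _
      _ ≤ y 0 * y 1 * (4 * (t 0 * t 1)) := by gcongr; linarith
      _ ≤ (y 0 * t 0 + y 1 * t 1) ^ 2 := by linarith [sq_nonneg (y 0 * t 0 - y 1 * t 1)]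
  have := (abs_le.1 (abs_le_of_sq_le_sq hcross (by positivity))).1
  rw [dotProduct, Fin.sum_univ_three]
  linarith

theorem ae_norm_expWeight_mul_le {f : (Fin 3 → ℝ) → ℂ}
    (hsupp : ∀ᵐ t, f t ≠ 0 → t ∈ dualCone) {y : Fin 3 → ℝ} (hy : y ∈ Sigma3) :
    ∀ᵐ t, ‖(expWeight y t : ℂ) * f t‖ ≤ ‖f t‖ := by
  filter_upwards [hsupp] with t ht
  by_cases hft : f t = 0
  · simp [hft]
  · rw [norm_mul, norm_expWeight]
    refine mul_le_of_le_one_left (norm_nonneg _) (Real.exp_le_one_iff.2 (neg_nonpos.2 ?_))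
    have := dotProduct_nonneg_of_mem_dualCone hy (ht hft)
    positivity

theorem tubeIntegrable_of_memLp_two_of_dualCone {f : (Fin 3 → ℝ) → ℂ} (hf : MemLp f 2)
    (hsupp : ∀ᵐ t, f t ≠ 0 → t ∈ dualCone) : TubeIntegrable Sigma3 f :=
  tubeIntegrable_of_memLp_two isOpen_Sigma3 fun y hy => hf.of_le
    ((Complex.continuous_ofReal.comp (continuous_expWeight y)).aestronglyMeasurable.mul hf.1)
    (ae_norm_expWeight_mul_le hsupp hy)

theorem hardyNormSqSigma_fourierLaplace_le {f : (Fin 3 → ℝ) → ℂ} (hf : TubeIntegrable Sigma3 f)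
    (hsupp : ∀ᵐ t, f t ≠ 0 → t ∈ dualCone) :
    hardyNormSqSigma (fourierLaplace f) ≤ ∫⁻ t, ‖f t‖ₑ ^ 2 := by
  refine iSup₂_le fun y hy => ?_
  have hslice : eLpNorm (fun x => fourierLaplace f (ofReIm x y)) 2 ≤ eLpNorm f 2 :=
    (eLpNorm_fourierLaplace_ofReIm_le (hf y hy)).trans
      (eLpNorm_mono_ae (ae_norm_expWeight_mul_le hsupp hy))
  have hsq := pow_le_pow_left₀ zero_le hslice 2
  rwa [eLpNorm_two_sq, eLpNorm_two_sq] at hsq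

end HardyDensity

section BergmanToBoxHardy

open scoped Real

/-- A cone inside `dualCone` on which `boxSymbol t` is comparable to `t₀t₁`; it carries the lifted
densities. -/
def narrowCone : Set (Fin 3 → ℝ) := {t | 0 < t 0 ∧ 0 < t 1 ∧ t 2 ^ 2 ≤ t 0 * t 1}

/-- The factor turning a density on the quadrant into a density on `ℝ³`: times `boxSymbol ^ m`, it
has integral `1` along each fibre of `narrowCone`, an interval of length `2√(t₀t₁)`. -/
def boxLift (m : ℕ) : (Fin 3 → ℝ) → ℝ :=
  narrowCone.indicator fun t => (boxSymbol t ^ m * (2 * √(t 0 * t 1)))⁻¹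

/-- The density on `ℝ³` built from `g` on the quadrant, whose fibre integrals against
`boxSymbol ^ m` give back `g`. -/
def liftDensity (m : ℕ) (g : (Fin 2 → ℝ) → ℂ) (t : Fin 3 → ℝ) : ℂ := boxLift m t * g ![t 0, t 1]

variable {m : ℕ} {g : (Fin 2 → ℝ) → ℂ} {s : Fin 2 → ℝ} {r : ℝ}

theorem narrowCone_subset_dualCone : narrowCone ⊆ dualCone := fun t ⟨h0, h1, h2⟩ =>
  ⟨h0.le, h1.le, by linarith [mul_pos h0 h1]⟩

theorem measurableSet_narrowCone : MeasurableSet narrowCone :=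
  (measurableSet_lt measurable_const (measurable_pi_apply 0)).inter
    ((measurableSet_lt measurable_const (measurable_pi_apply 1)).inter
      (measurableSet_le ((measurable_pi_apply 2).pow_const 2)
        ((measurable_pi_apply 0).mul (measurable_pi_apply 1))))

theorem measurable_boxLift (m : ℕ) : Measurable (boxLift m) := by
  refine Measurable.indicator ?_ measurableSet_narrowCone
  unfold boxSymbol
  fun_prop

theorem snocPoint_mem_narrowCone : snocPoint s r ∈ narrowCone ↔
    s ∈ quadrant ∧ r ∈ Icc (-√(s 0 * s 1)) (√(s 0 * s 1)) := by
  change 0 < s 0 ∧ 0 < s 1 ∧ r ^ 2 ≤ s 0 * s 1 ↔ (0 < s 0 ∧ 0 < s 1) ∧ _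
  rw [← and_assoc, mem_Icc]
  exact and_congr_right fun hs => Real.sq_le (mul_pos hs.1 hs.2).le

theorem le_boxSymbol_of_mem_narrowCone (h : snocPoint s r ∈ narrowCone) :
    12 * π ^ 2 * (s 0 * s 1) ≤ boxSymbol (snocPoint s r) := by
  have hr : r ^ 2 ≤ s 0 * s 1 := h.2.2
  rw [boxSymbol_snocPoint]
  nlinarith [mul_le_mul_of_nonneg_left hr (sq_nonneg π)]

theorem boxSymbol_pos_of_mem_narrowCone (h : snocPoint s r ∈ narrowCone) :
    0 < boxSymbol (snocPoint s r) := by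
  have hq : 0 < s 0 * s 1 := mul_pos h.1 h.2.1
  exact lt_of_lt_of_le (by positivity) (le_boxSymbol_of_mem_narrowCone h)

theorem boxLift_snocPoint (m : ℕ) (hs : s ∈ quadrant) (r : ℝ) :
    boxLift m (snocPoint s r) = (Icc (-√(s 0 * s 1)) (√(s 0 * s 1))).indicator
      (fun r => (boxSymbol (snocPoint s r) ^ m * (2 * √(s 0 * s 1)))⁻¹) r := by
  have hiff : snocPoint s r ∈ narrowCone ↔ r ∈ Icc (-√(s 0 * s 1)) (√(s 0 * s 1)) :=
    snocPoint_mem_narrowCone.trans (and_iff_right hs)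
  by_cases hr : r ∈ Icc (-√(s 0 * s 1)) (√(s 0 * s 1))
  · rw [boxLift, indicator_of_mem (hiff.2 hr), indicator_of_mem hr]
    rfl
  · rw [boxLift, indicator_of_notMem (mt hiff.1 hr), indicator_of_notMem hr]

theorem boxLift_snocPoint_of_notMem (m : ℕ) (hs : s ∉ quadrant) (r : ℝ) :
    boxLift m (snocPoint s r) = 0 :=
  indicator_of_notMem (fun h => hs (snocPoint_mem_narrowCone.1 h).1) _

theorem boxSymbol_pow_mul_boxLift (m : ℕ) (hs : s ∈ quadrant) (r : ℝ) :
    boxSymbol (snocPoint s r) ^ m * boxLift m (snocPoint s r) =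
      (Icc (-√(s 0 * s 1)) (√(s 0 * s 1))).indicator (fun _ => (2 * √(s 0 * s 1))⁻¹) r := by
  rw [boxLift_snocPoint m hs]
  by_cases hr : r ∈ Icc (-√(s 0 * s 1)) (√(s 0 * s 1))
  · have hP := boxSymbol_pos_of_mem_narrowCone (snocPoint_mem_narrowCone.2 ⟨hs, hr⟩)
    rw [indicator_of_mem hr, indicator_of_mem hr, mul_inv, mul_inv_cancel_left₀ (by positivity)]
  · rw [indicator_of_notMem hr, indicator_of_notMem hr, mul_zero]

theorem integral_boxSymbol_pow_mul_boxLift (m : ℕ) (hs : s ∈ quadrant) :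
    ∫ r, boxSymbol (snocPoint s r) ^ m * boxLift m (snocPoint s r) = 1 := by
  have hq : 0 < √(s 0 * s 1) := Real.sqrt_pos.2 (mul_pos hs.1 hs.2)
  simp only [boxSymbol_pow_mul_boxLift m hs]
  rw [integral_indicator measurableSet_Icc, setIntegral_const, Real.volume_real_Icc,
    max_eq_left (by linarith), smul_eq_mul, sub_neg_eq_add, ← two_mul,
    mul_inv_cancel₀ (by positivity)]

theorem enorm_boxLift_sq_le (m : ℕ) (hs : s ∈ quadrant) (r : ℝ) :
    ‖boxLift m (snocPoint s r)‖ₑ ^ 2 ≤ (Icc (-√(s 0 * s 1)) (√(s 0 * s 1))).indicator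
      (fun _ => ENNReal.ofReal
        (((12 * π ^ 2 * (s 0 * s 1)) ^ m * (2 * √(s 0 * s 1)))⁻¹ ^ 2)) r := by
  have hq : 0 < s 0 * s 1 := mul_pos hs.1 hs.2
  rw [boxLift_snocPoint m hs]
  by_cases hr : r ∈ Icc (-√(s 0 * s 1)) (√(s 0 * s 1))
  · have hcone := snocPoint_mem_narrowCone.2 ⟨hs, hr⟩
    have hle := le_boxSymbol_of_mem_narrowCone hcone
    have hP := boxSymbol_pos_of_mem_narrowCone hcone
    rw [indicator_of_mem hr, indicator_of_mem hr, Real.enorm_of_nonneg (by positivity),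
      ← ENNReal.ofReal_pow (by positivity)]
    gcongr
  · simp [indicator_of_notMem hr]

-- The converse balance of powers: `q^{-2m-1}` from `boxLift ^ 2`, `√q` from the length of the
-- fibre, and the weights are `q^{-2m-1/2}` up to a constant.
theorem exists_lintegral_enorm_boxLift_sq_le (m : ℕ) :
    ∃ C : ℝ, 0 < C ∧ ∀ s : Fin 2 → ℝ, ∫⁻ r, ‖boxLift m (snocPoint s r)‖ₑ ^ 2
      ≤ ENNReal.ofReal C *
        (laplaceWeight (2 * m - 1 / 2) (s 0) * laplaceWeight (2 * m - 1 / 2) (s 1)) := by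
  obtain ⟨c, hc, hweight⟩ := exists_laplaceWeight_mul_eq (neg_one_lt_two_mul_sub_half m)
  refine ⟨((12 * π ^ 2) ^ (2 * m) * 2 * c)⁻¹, by positivity, fun s => ?_⟩
  by_cases hs : s ∈ quadrant
  · have hq : 0 < s 0 * s 1 := mul_pos hs.1 hs.2
    refine (lintegral_mono (enorm_boxLift_sq_le m hs)).trans_eq ?_
    rw [hweight _ _ hs.1 hs.2, rpow_two_mul_sub_half_add_one hq,
      lintegral_indicator measurableSet_Icc, setLIntegral_const, Real.volume_Icc,
      ← ENNReal.ofReal_mul (by positivity), ← ENNReal.ofReal_mul (by positivity)]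
    congr 1
    generalize s 0 * s 1 = q at hq
    rw [mul_pow (12 * π ^ 2) q, pow_mul' q 2 m, pow_mul' (12 * π ^ 2) 2 m]
    field_simp
    linarith
  · simp [boxLift_snocPoint_of_notMem m hs]

theorem liftDensity_snocPoint (m : ℕ) (g : (Fin 2 → ℝ) → ℂ) (s : Fin 2 → ℝ) (r : ℝ) :
    liftDensity m g (snocPoint s r) = boxLift m (snocPoint s r) * g s :=
  congrArg (fun s' => (boxLift m (snocPoint s r) : ℂ) * g s') (FinVec.etaExpand_eq s)

theorem mem_dualCone_of_liftDensity_ne_zero {t : Fin 3 → ℝ} (h : liftDensity m g t ≠ 0) :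
    t ∈ dualCone := by
  refine narrowCone_subset_dualCone (by_contra fun ht => h ?_)
  rw [liftDensity, boxLift, indicator_of_notMem ht, Complex.ofReal_zero, zero_mul]

theorem aestronglyMeasurable_liftDensity (m : ℕ) (hg : AEStronglyMeasurable g) :
    AEStronglyMeasurable (liftDensity m g) := by
  rw [← measurePreserving_snocPoint.aestronglyMeasurable_comp_iff measurableEmbedding_snocPoint]
  have hlift : Measurable fun p : (Fin 2 → ℝ) × ℝ => (boxLift m (snocPoint p.1 p.2) : ℂ) :=
    Complex.measurable_ofReal.comp
      ((measurable_boxLift m).comp measurableEmbedding_snocPoint.measurable)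
  refine (hlift.aestronglyMeasurable.mul hg.comp_fst).congr (.of_forall fun p => ?_)
  exact (liftDensity_snocPoint m g p.1 p.2).symm

theorem exists_lintegral_enorm_liftDensity_sq_le (m : ℕ) :
    ∃ C : ℝ, 0 < C ∧ ∀ g : (Fin 2 → ℝ) → ℂ, AEStronglyMeasurable g →
      ∫⁻ t, ‖liftDensity m g t‖ₑ ^ 2 ≤ ENNReal.ofReal C * ∫⁻ s : Fin 2 → ℝ,
        laplaceWeight (2 * m - 1 / 2) (s 0) * laplaceWeight (2 * m - 1 / 2) (s 1) * ‖g s‖ₑ ^ 2 := by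
  obtain ⟨C, hC, hfibre⟩ := exists_lintegral_enorm_boxLift_sq_le m
  refine ⟨C, hC, fun g hg => ?_⟩
  rw [lintegral_snocPoint ((aestronglyMeasurable_liftDensity m hg).enorm.pow_const 2),
    ← lintegral_const_mul' _ _ ENNReal.ofReal_ne_top]
  refine lintegral_mono fun s => ?_
  simp only [liftDensity_snocPoint, enorm_mul, mul_pow]
  rw [lintegral_mul_const' _ _ (by finiteness), ← mul_assoc]
  refine mul_le_mul_left ?_ _
  simpa [← ofReal_norm] using hfibre s

theorem integral_boxSymbol_pow_mul_liftDensity (m : ℕ) (hg : s ∉ quadrant → g s = 0) :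
    ∫ r, (boxSymbol (snocPoint s r) : ℂ) ^ m * liftDensity m g (snocPoint s r) = g s := by
  simp only [liftDensity_snocPoint, ← mul_assoc]
  rw [integral_mul_const]
  by_cases hs : s ∈ quadrant
  · have hone := congrArg (Complex.ofReal) (integral_boxSymbol_pow_mul_boxLift m hs)
    rw [← integral_complex_ofReal] at hone
    push_cast at hone
    rw [hone, one_mul]
  · rw [hg hs, mul_zero]

theorem exists_iterate_BoxS_eqOn_hardyNormSqSigma_le (m : ℕ) :
    ∃ C : ℝ, 0 < C ∧ ∀ G : ℂ × ℂ → ℂ, DifferentiableOn ℂ G (UHP ×ˢ UHP) →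
      bergNormSqProd (2 * m - 1 / 2) (2 * m - 1 / 2) G < ⊤ →
      ∃ F : (Fin 3 → ℂ) → ℂ, DifferentiableOn ℂ F TSigma ∧
        hardyNormSqSigma F
          ≤ ENNReal.ofReal C * bergNormSqProd (2 * m - 1 / 2) (2 * m - 1 / 2) G ∧
        EqOn (fun p : ℂ × ℂ => BoxS^[m] F ![p.1, p.2, 0]) G (UHP ×ˢ UHP) := by
  obtain ⟨C, hC, hnorm⟩ := exists_lintegral_enorm_liftDensity_sq_le m
  refine ⟨C, hC, fun G hG hfin => ?_⟩
  obtain ⟨g, hg, hGg, hgnorm⟩ := exists_density_of_bergNormSqProd_lt_top _ _ hG hfin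
  have hmeas := hg.aestronglyMeasurable (y := ![1, 1]) ⟨one_pos, one_pos⟩
  have hg0 := ae_eq_zero_of_notMem_quadrant (neg_one_lt_two_mul_sub_half m)
    (neg_one_lt_two_mul_sub_half m) hmeas (hgnorm.trans_lt hfin).ne
  have hle := hgnorm ▸ hnorm g hmeas
  have hsupp : ∀ᵐ t, liftDensity m g t ≠ 0 → t ∈ dualCone :=
    .of_forall fun t => mem_dualCone_of_liftDensity_ne_zero
  have hfinite : eLpNorm (liftDensity m g) 2 ^ 2 < ⊤ := by
    rw [eLpNorm_two_sq]
    exact hle.trans_lt (ENNReal.mul_lt_top ENNReal.ofReal_lt_top hfin)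
  have hmem : MemLp (liftDensity m g) 2 := ⟨aestronglyMeasurable_liftDensity m hmeas,
    (ENNReal.pow_lt_top_iff.1 hfinite).resolve_right two_ne_zero⟩
  have hf := tubeIntegrable_of_memLp_two_of_dualCone hmem hsupp
  refine ⟨fourierLaplace (liftDensity m g), hf.differentiableOn isOpen_Sigma3,
    (hardyNormSqSigma_fourierLaplace_le hf hsupp).trans hle, fun p hp => ?_⟩
  rw [(restrict_iterate_BoxS_eqOn hf (eqOn_refl _ _) m).2 hp, hGg hp]
  refine integral_congr_ae ?_
  filter_upwards [hg0] with s hs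
  rw [integral_boxSymbol_pow_mul_liftDensity m hs]

end BergmanToBoxHardy

/-- for a positive measure `μ` on `Π⁺×Π⁺`, `μ(z₁,z₂) ⊗ δ₀(z₃)` is an
`m`-box Carleson measure for `H²(T_Σ)` iff `μ` is a Carleson measure for the
weighted Bergman space `A²_{(2m−1/2,2m−1/2)}(Π⁺×Π⁺)`. -/
theorem dirac_box_carleson_iff_bergman_prod_carleson (m : ℕ) (μ : Measure (ℂ × ℂ)) :
    (∃ C : ℝ, 0 < C ∧ ∀ F : (Fin 3 → ℂ) → ℂ,
        DifferentiableOn ℂ F TSigma → hardyNormSqSigma F < ⊤ →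
        (∫⁻ p in UHP ×ˢ UHP, (‖BoxS^[m] F ![p.1, p.2, 0]‖₊ : ℝ≥0∞) ^ 2 ∂μ)
          ≤ ENNReal.ofReal C * hardyNormSqSigma F)
    ↔ (∃ C' : ℝ, 0 < C' ∧ ∀ G : ℂ × ℂ → ℂ,
        DifferentiableOn ℂ G (UHP ×ˢ UHP) →
        bergNormSqProd (2 * m - 1 / 2) (2 * m - 1 / 2) G < ⊤ →
        (∫⁻ p in UHP ×ˢ UHP, (‖G p‖₊ : ℝ≥0∞) ^ 2 ∂μ)
          ≤ ENNReal.ofReal C' * bergNormSqProd (2 * m - 1 / 2) (2 * m - 1 / 2) G) := by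
  constructor
  · rintro ⟨C, hC, hcarleson⟩
    obtain ⟨K, hK, hlift⟩ := exists_iterate_BoxS_eqOn_hardyNormSqSigma_le m
    refine ⟨C * K, mul_pos hC hK, fun G hG hfin => ?_⟩
    obtain ⟨F, hF, hnorm, hFG⟩ := hlift G hG hfin
    rw [ENNReal.ofReal_mul hC.le, mul_assoc]
    calc _ = ∫⁻ p in UHP ×ˢ UHP, ‖BoxS^[m] F ![p.1, p.2, 0]‖ₑ ^ 2 ∂μ :=
          setLIntegral_congr_fun (isOpen_UHP.prod isOpen_UHP).measurableSet fun p hp =>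
            congrArg (‖·‖ₑ ^ 2) (hFG hp).symm
      _ ≤ ENNReal.ofReal C * hardyNormSqSigma F :=
          hcarleson F hF (hnorm.trans_lt (ENNReal.mul_lt_top ENNReal.ofReal_lt_top hfin))
      _ ≤ _ := mul_le_mul_right hnorm _
  · rintro ⟨C, hC, hcarleson⟩
    obtain ⟨K, hK, hbox⟩ := exists_bergNormSqProd_iterate_BoxS_le m
    refine ⟨C * K, mul_pos hC hK, fun F hF hfin => ?_⟩
    obtain ⟨hdiff, hnorm⟩ := hbox F hF hfin
    rw [ENNReal.ofReal_mul hC.le, mul_assoc]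
    exact (hcarleson _ hdiff (hnorm.trans_lt (ENNReal.mul_lt_top ENNReal.ofReal_lt_top
      hfin))).trans (mul_le_mul_right hnorm _)
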